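/- arXiv:2311.05116 — 2 statements merged into one kernel-verified Lean document; each statement's English description precedes it below -/
import Mathlib

section
/- Let N ≥ 1, d ≥ 1 and k ≥ 1 be integers and let f_1, …, f_k be real polynomials in N variables, each of total degree at most d. Then the common zero set V = {x ∈ ℝ^N : f_1(x) = ⋯ = f_k(x) = 0}, equipped with the subspace topology from ℝ^N, has at most d·(2d−1)^{N−1} connected components. -/
/-!
**Counting solutions.** Consider a system `f i = ε * X i ^ e i` over a field, one equation for each
variable, with `f i` of degree at most `e i`. The operator `reduction e f`, which replaces one
factor `X i ^ e i` of each monomial by `f i`, preserves the degree filtration, and on functions on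
the solution set it agrees with multiplication by `ε` up to monomials with all exponents below `e`.
Unless `ε` is one of its finitely many eigenvalues in a fixed degree, those monomials therefore span
all functions on any `∏ i, e i + 1` solutions, which is absurd; so generically there are at most
`∏ i, e i` solutions.

**Producing solutions.** The zero set of the `f i` is the zero set of a sum of squares `F` of degree
at most `2 * d`. For suitable small `ε, δ > 0`, the sublevel set of
`G = F + ε * ∑ i, X i ^ (2 * d) - δ` at `0` is compact and has at least as many components as any
prescribed finite number of components of `F = 0`. On each of these components a fixed coordinate
`X i₀` attains a maximum and a minimum, at two distinct points of `G = 0` where the partial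
derivatives of `G` other than that for `i₀` vanish. As `∂G/∂X i` is the sum of
`2 * d * ε * X i ^ (2 * d - 1)` and a polynomial of degree at most `2 * d - 1` independent of `ε`,
these points solve a system as above with `∏ i, e i = 2 * d * (2 * d - 1) ^ (N - 1)`, and the bound
follows on halving.
-/

open MvPolynomial Filter Topology

section Interpolation

variable {σ R : Type*} [CommRing R]

theorem exists_totalDegree_le_one_eval_eq_zero_eval_ne_zero [Nontrivial R] {z w : σ → R}
    (h : z ≠ w) :
    ∃ l : MvPolynomial σ R, l.totalDegree ≤ 1 ∧ eval z l = 0 ∧ eval w l ≠ 0 := by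
  obtain ⟨i, hi⟩ := Function.ne_iff.1 h
  refine ⟨X i - C (z i), (totalDegree_sub_C_le _ _).trans (totalDegree_X i).le, by simp, ?_⟩
  simpa [sub_eq_zero] using hi.symm

theorem exists_totalDegree_le_card_vanishing [IsDomain R] {s : Finset (σ → R)} {w : σ → R}
    (hw : w ∉ s) :
    ∃ p : MvPolynomial σ R, p.totalDegree ≤ s.card ∧ (∀ z ∈ s, eval z p = 0) ∧ eval w p ≠ 0 := by
  choose! l hdeg hzero hne using fun (z : σ → R) (h : z ≠ w) =>
    exists_totalDegree_le_one_eval_eq_zero_eval_ne_zero h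
  have ne_w : ∀ z ∈ s, z ≠ w := fun z hz => ne_of_mem_of_not_mem hz hw
  refine ⟨∏ z ∈ s, l z, ?_, fun z hz => ?_, ?_⟩
  · calc (∏ z ∈ s, l z).totalDegree ≤ ∑ z ∈ s, (l z).totalDegree := totalDegree_finsetProd _ _
      _ ≤ s.card := by
        simpa using Finset.sum_le_card_nsmul s _ 1 fun z hz => hdeg z (ne_w z hz)
  · rw [map_prod]
    exact Finset.prod_eq_zero hz (hzero z (ne_w z hz))
  · rw [map_prod]
    exact Finset.prod_ne_zero_iff.2 fun z hz => hne z (ne_w z hz)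

theorem exists_totalDegree_le_eval_eq {K : Type*} [Field K] {s : Finset (σ → K)} {m : ℕ}
    (hs : s.card ≤ m + 1) (y : (σ → K) → K) :
    ∃ p : MvPolynomial σ K, p.totalDegree ≤ m ∧ ∀ z ∈ s, eval z p = y z := by
  classical
  choose p hdeg hzero hne using fun w : σ → K =>
    exists_totalDegree_le_card_vanishing (Finset.notMem_erase w s)
  refine ⟨∑ w ∈ s, C (y w / eval w (p w)) * p w, totalDegree_finsetSum_le fun w hw => ?_,
    fun z hz => ?_⟩
  · calc (C (y w / eval w (p w)) * p w).totalDegree ≤ 0 + (s.erase w).card := by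
          grw [totalDegree_mul, totalDegree_C, hdeg]
      _ ≤ m := by rw [Finset.card_erase_of_mem hw]; omega
  · rw [map_sum, Finset.sum_eq_single_of_mem z hz fun w _ hwz => ?_, map_mul, eval_C,
      div_mul_cancel₀ _ (hne z)]
    rw [map_mul, hzero w z (Finset.mem_erase.2 ⟨hwz.symm, hz⟩), mul_zero]

end Interpolation

section Degree

variable {σ τ R : Type*} [CommSemiring R]

theorem totalDegree_map_le_of_monomial (L : MvPolynomial σ R →ₗ[R] MvPolynomial τ R)
    {p : MvPolynomial σ R} {m : ℕ}
    (h : ∀ a ∈ p.support, (L (monomial a 1)).totalDegree ≤ m) : (L p).totalDegree ≤ m := by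
  rw [as_sum p, map_sum]
  refine totalDegree_finsetSum_le fun a ha => ?_
  rw [← mul_one (coeff a p), ← smul_eq_mul, ← smul_monomial, map_smul]
  exact (totalDegree_smul_le _ _).trans (h a ha)

theorem totalDegree_monomial_sub_single_add_le {i : σ} {e : ℕ} {a : σ →₀ ℕ} (h : e ≤ a i) (c : R) :
    (monomial (a - Finsupp.single i e) c).totalDegree + e ≤ a.degree := by
  have hdeg := congrArg Finsupp.degree (tsub_add_cancel_of_le (Finsupp.single_le_iff.2 h))
  rw [map_add, Finsupp.degree_single] at hdeg
  have : (monomial (a - Finsupp.single i e) c).totalDegree ≤ (a - Finsupp.single i e).degree :=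
    totalDegree_monomial_le _ c
  omega

theorem totalDegree_pderiv_le (p : MvPolynomial σ R) (i : σ) :
    (pderiv i p).totalDegree ≤ p.totalDegree - 1 := by
  refine totalDegree_map_le_of_monomial (pderiv i).toLinearMap fun a ha => ?_
  have hdeg : a.degree ≤ p.totalDegree := le_totalDegree ha
  change (pderiv i (monomial a 1)).totalDegree ≤ _
  rw [pderiv_monomial]
  rcases Nat.eq_zero_or_pos (a i) with hi | hi
  · simp [hi]
  · have := totalDegree_monomial_sub_single_add_le (e := 1) hi ((1 : R) * a i)
    omega

end Degree

section Bezout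

variable {σ K : Type*} [Field K] {e : σ → ℕ} {f : σ → MvPolynomial σ K} {ε : K}

open Classical in
/-- One division step by the system `f i = ε * X i ^ e i`, up to the factor `ε`: a monomial
divisible by some `X i ^ e i` (an arbitrary such `i` is chosen) has that factor replaced by `f i`,
and every other monomial is sent to `0`. -/
noncomputable def reduction (e : σ → ℕ) (f : σ → MvPolynomial σ K) :
    MvPolynomial σ K →ₗ[K] MvPolynomial σ K :=
  (basisMonomials σ K).constr K fun a =>
    if h : ∃ i, e i ≤ a i then
      monomial (a - Finsupp.single h.choose (e h.choose)) 1 * f h.choose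
    else 0

theorem reduction_monomial_of_exists_le {a : σ →₀ ℕ} (h : ∃ i, e i ≤ a i) :
    ∃ i, e i ≤ a i ∧
      reduction e f (monomial a 1) = monomial (a - Finsupp.single i (e i)) 1 * f i := by
  refine ⟨h.choose, h.choose_spec, ?_⟩
  exact ((basisMonomials σ K).constr_basis K _ a).trans (dif_pos h)

theorem reduction_monomial_of_forall_lt {a : σ →₀ ℕ} (h : ∀ i, a i < e i) :
    reduction e f (monomial a 1) = 0 :=
  ((basisMonomials σ K).constr_basis K _ a).trans
    (dif_neg (by simpa only [not_exists, not_le] using h))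

theorem totalDegree_reduction_le (hf : ∀ i, (f i).totalDegree ≤ e i) (p : MvPolynomial σ K) :
    (reduction e f p).totalDegree ≤ p.totalDegree := by
  refine totalDegree_map_le_of_monomial _ fun a ha => ?_
  by_cases h : ∃ i, e i ≤ a i
  · obtain ⟨i, hi, hred⟩ := reduction_monomial_of_exists_le (f := f) h
    calc (reduction e f (monomial a 1)).totalDegree
        ≤ (monomial (a - Finsupp.single i (e i)) (1 : K)).totalDegree + e i := by
          rw [hred]
          grw [totalDegree_mul, hf i]
      _ ≤ a.degree := totalDegree_monomial_sub_single_add_le hi 1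
      _ ≤ p.totalDegree := le_totalDegree ha
  · simp only [not_exists, not_le] at h
    simp [reduction_monomial_of_forall_lt h]

/-- Simultaneous evaluation at the points of `s`, used to bound the number of these points by the
dimension of a space of polynomials that it maps onto `s → K`. -/
noncomputable def evalOn (s : Finset (σ → K)) : MvPolynomial σ K →ₗ[K] (s → K) :=
  LinearMap.pi fun z => (aeval (z : σ → K)).toLinearMap

theorem evalOn_apply (s : Finset (σ → K)) (p : MvPolynomial σ K) (z : s) :
    evalOn s p z = eval (z : σ → K) p :=
  rfl

theorem evalOn_reduction_monomial_sub_mem_map {s : Finset (σ → K)}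
    (hs : ∀ z ∈ s, ∀ i, eval z (f i) = ε * z i ^ e i) (a : σ →₀ ℕ) :
    evalOn s (reduction e f (monomial a 1) - ε • monomial a 1) ∈
      (restrictSupport K {a | ∀ i, a i < e i}).map (evalOn s) := by
  by_cases h : ∃ i, e i ≤ a i
  · obtain ⟨i, hi, hred⟩ := reduction_monomial_of_exists_le (f := f) h
    have hsplit : monomial a (1 : K) = monomial (a - Finsupp.single i (e i)) 1 * X i ^ e i := by
      rw [X_pow_eq_monomial, monomial_mul, tsub_add_cancel_of_le (Finsupp.single_le_iff.2 hi),
        one_mul]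
    have hzero : evalOn s (reduction e f (monomial a 1) - ε • monomial a 1) = 0 := by
      ext z
      rw [hred, hsplit]
      simp only [evalOn_apply, map_sub, map_mul, smul_eval, map_pow, eval_X, hs z z.2 i,
        Pi.zero_apply]
      ring
    rw [hzero]
    exact Submodule.zero_mem _
  · simp only [not_exists, not_le] at h
    rw [reduction_monomial_of_forall_lt h, zero_sub, ← smul_neg, map_smul, map_neg]
    exact Submodule.smul_mem _ _ <| Submodule.neg_mem _ <| Submodule.mem_map_of_mem <|
      (monomial_mem_restrictSupport K).2 (Or.inl h)

theorem evalOn_reduction_sub_mem_map {s : Finset (σ → K)}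
    (hs : ∀ z ∈ s, ∀ i, eval z (f i) = ε * z i ^ e i) (p : MvPolynomial σ K) :
    evalOn s (reduction e f p - ε • p) ∈
      (restrictSupport K {a | ∀ i, a i < e i}).map (evalOn s) := by
  induction p using MvPolynomial.induction_on' with
  | monomial a c =>
    have hc : monomial a c = c • monomial a (1 : K) := by rw [smul_monomial, smul_eq_mul, mul_one]
    rw [hc, map_smul, smul_comm, ← smul_sub, map_smul]
    exact Submodule.smul_mem _ c (evalOn_reduction_monomial_sub_mem_map hs a)
  | add p q hp hq =>
    rw [map_add, smul_add, add_sub_add_comm, map_add]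
    exact Submodule.add_mem _ hp hq

theorem finrank_map_restrictSupport_forall_lt_le [Fintype σ] {V : Type*} [AddCommGroup V]
    [Module K V] (L : MvPolynomial σ K →ₗ[K] V) (e : σ → ℕ) :
    Module.finrank K ((restrictSupport K {a : σ →₀ ℕ | ∀ i, a i < e i}).map L) ≤ ∏ i, e i := by
  let box_equiv : {a : σ →₀ ℕ | ∀ i, a i < e i} ≃ ∀ i, Fin (e i) :=
    (Finsupp.equivFunOnFinite.subtypeEquiv fun a => Iff.rfl).trans <|
      (Equiv.subtypePiEquivPi (p := fun i n => n < e i)).trans <|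
        Equiv.piCongrRight fun i => Fin.equivSubtype.symm
  let basis := basisRestrictSupport K {a : σ →₀ ℕ | ∀ i, a i < e i}
  have : Finite {a : σ →₀ ℕ | ∀ i, a i < e i} := Finite.of_equiv _ box_equiv.symm
  have : Module.Finite K (restrictSupport K {a : σ →₀ ℕ | ∀ i, a i < e i}) :=
    Module.Finite.of_basis basis
  calc Module.finrank K ((restrictSupport K {a : σ →₀ ℕ | ∀ i, a i < e i}).map L)
      ≤ Module.finrank K (restrictSupport K {a : σ →₀ ℕ | ∀ i, a i < e i}) :=
        Submodule.finrank_map_le _ _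
    _ = Nat.card (∀ i, Fin (e i)) := by
      rw [Module.finrank_eq_nat_card_basis basis, Nat.card_congr box_equiv]
    _ = ∏ i, e i := by simp only [Nat.card_pi, Nat.card_fin]

theorem finite_setOf_not_surjOn_sub_smul {V : Type*} [AddCommGroup V] [Module K V]
    {L : V →ₗ[K] V} {W : Submodule K V} [FiniteDimensional K W] (hW : ∀ v ∈ W, L v ∈ W) :
    {ε : K | ¬ Set.SurjOn (fun v => L v - ε • v) W W}.Finite := by
  refine (Module.End.finite_spectrum (L.restrict hW)).subset fun ε hε => ?_
  by_contra hspec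
  have hunit := (IsUnit.sub_iff).1 (spectrum.notMem_iff.1 hspec)
  refine hε fun w hw => ?_
  obtain ⟨v, hv⟩ := ((Module.End.isUnit_iff _).1 hunit).2 ⟨w, hw⟩
  exact ⟨v, v.2, congrArg Subtype.val hv⟩

theorem card_le_prod_of_surjOn [Fintype σ] {s : Finset (σ → K)} {m : ℕ}
    (hs : ∀ z ∈ s, ∀ i, eval z (f i) = ε * z i ^ e i) (hcard : s.card ≤ m + 1)
    (hsurj : Set.SurjOn (fun p => reduction e f p - ε • p)
      (restrictTotalDegree σ K m) (restrictTotalDegree σ K m)) :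
    s.card ≤ ∏ i, e i := by
  have htop : (restrictSupport K {a | ∀ i, a i < e i}).map (evalOn s) = ⊤ := by
    refine eq_top_iff.2 fun y _ => ?_
    obtain ⟨q, hqdeg, hq⟩ := exists_totalDegree_le_eval_eq hcard (Function.extend (↑) y 0)
    obtain ⟨p, -, hp⟩ := hsurj ((mem_restrictTotalDegree σ m q).2 hqdeg)
    have hy : y = evalOn s q := by
      ext z
      rw [evalOn_apply, hq z z.2, Subtype.val_injective.extend_apply]
    rw [hy, ← hp]
    exact evalOn_reduction_sub_mem_map hs p
  calc s.card = Module.finrank K (s → K) := by simp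
    _ = Module.finrank K ((restrictSupport K {a | ∀ i, a i < e i}).map (evalOn s)) := by
      rw [htop, finrank_top]
    _ ≤ ∏ i, e i := finrank_map_restrictSupport_forall_lt_le _ e

theorem finite_setOf_prod_lt_encard [Fintype σ] (hf : ∀ i, (f i).totalDegree ≤ e i) :
    {ε : K | (∏ i, e i : ℕ) < {z : σ → K | ∀ i, eval z (f i) = ε * z i ^ e i}.encard}.Finite := by
  refine (finite_setOf_not_surjOn_sub_smul (L := reduction e f)
    (W := restrictTotalDegree σ K (∏ i, e i)) fun p hp => ?_).subset fun ε hε hsurj => ?_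
  · rw [mem_restrictTotalDegree] at hp ⊢
    exact (totalDegree_reduction_le hf p).trans hp
  · obtain ⟨t, hts, ht⟩ := Set.exists_subset_encard_eq (Order.add_one_le_of_lt hε)
    lift t to Finset (σ → K) using Set.finite_of_encard_eq_coe (by exact_mod_cast ht)
    rw [Set.encard_coe_eq_coe_finsetCard] at ht
    have hcard : t.card = ∏ i, e i + 1 := by exact_mod_cast ht
    have := card_le_prod_of_surjOn hts hcard.le hsurj
    omega

end Bezout

section Components

variable {X : Type*} [TopologicalSpace X]

theorem isClosed_connectedComponentIn {S : Set X} (hS : IsClosed S) (x : X) :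
    IsClosed (connectedComponentIn S x) := by
  by_cases h : x ∈ S
  · rw [connectedComponentIn_eq_image h]
    exact hS.isClosedEmbedding_subtypeVal.isClosedMap _ isClosed_connectedComponent
  · rw [connectedComponentIn_eq_empty h]
    exact isClosed_empty

theorem isPreconnected_iInter_of_directed [T2Space X] {κ : Type*} [Nonempty κ] {K : κ → Set X}
    (hdir : Directed (· ⊇ ·) K) (hcomp : ∀ n, IsCompact (K n))
    (hconn : ∀ n, IsPreconnected (K n)) : IsPreconnected (⋂ n, K n) := by
  refine isPreconnected_closed_iff.2 fun t t' ht ht' hcover ⟨a, haK, hat⟩ ⟨b, hbK, hbt'⟩ => ?_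
  by_contra hempty
  have hcompact : IsCompact (⋂ n, K n) :=
    (hcomp (Classical.arbitrary κ)).of_isClosed_subset (isClosed_iInter fun n => (hcomp n).isClosed)
      (Set.iInter_subset _ _)
  obtain ⟨u, v, hu, hv, htu, htv, huv⟩ := SeparatedNhds.of_isCompact_isCompact
    (hcompact.inter_right ht) (hcompact.inter_right ht')
    (Set.disjoint_left.2 fun x hx hx' => hempty ⟨x, hx.1, hx.2, hx'.2⟩)
  have hnhds : ∀ x ∈ ⋂ n, K n, u ∪ v ∈ 𝓝 x := fun x hx =>
    (hu.union hv).mem_nhds ((hcover hx).imp (fun h => htu ⟨hx, h⟩) fun h => htv ⟨hx, h⟩)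
  obtain ⟨n, hn⟩ := exists_subset_nhds_of_isCompact hdir hcomp hnhds
  obtain ⟨x, -, hxu, hxv⟩ := hconn n u v hu hv hn
    ⟨a, Set.mem_iInter.1 haK n, htu ⟨haK, hat⟩⟩ ⟨b, Set.mem_iInter.1 hbK n, htv ⟨hbK, hbt'⟩⟩
  exact Set.disjoint_left.1 huv hxu hxv

theorem connectedComponentIn_iInter_of_directed [T2Space X] {κ : Type*} [Nonempty κ]
    {K : κ → Set X} (hdir : Directed (· ⊇ ·) K) (hcomp : ∀ n, IsCompact (K n)) {p : X}
    (hp : ∀ n, p ∈ K n) :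
    connectedComponentIn (⋂ n, K n) p = ⋂ n, connectedComponentIn (K n) p := by
  refine (Set.subset_iInter fun n =>
    connectedComponentIn_mono p (Set.iInter_subset K n)).antisymm ?_
  have hconn : IsPreconnected (⋂ n, connectedComponentIn (K n) p) :=
    isPreconnected_iInter_of_directed
      (fun m n => (hdir m n).imp fun _ h =>
        ⟨connectedComponentIn_mono p h.1, connectedComponentIn_mono p h.2⟩)
      (fun n => (hcomp n).of_isClosed_subset (isClosed_connectedComponentIn (hcomp n).isClosed p)
        (connectedComponentIn_subset _ _))
      fun _ => isPreconnected_connectedComponentIn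
  exact hconn.subset_connectedComponentIn
    (Set.mem_iInter.2 fun n => mem_connectedComponentIn (hp n))
    (Set.iInter_mono fun n => connectedComponentIn_subset _ _)

theorem connectedComponentIn_eq_iff {S : Set X} {p q : X} (hq : q ∈ S) :
    connectedComponentIn S p = connectedComponentIn S q ↔ q ∈ connectedComponentIn S p :=
  ⟨fun h => h ▸ mem_connectedComponentIn hq, connectedComponentIn_eq⟩

theorem injective_connectedComponentIn_of_subset {ι : Type*} {S T : Set X} (hST : S ⊆ T)
    {p : ι → X} (hp : ∀ j, p j ∈ S)
    (hinj : Function.Injective fun j => connectedComponentIn T (p j)) :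
    Function.Injective fun j => connectedComponentIn S (p j) := fun _ j hij =>
  hinj <| connectedComponentIn_eq <| connectedComponentIn_mono _ hST <|
    (connectedComponentIn_eq_iff (hp j)).1 hij

theorem exists_injective_connectedComponentIn [T2Space X] {ι κ : Type*} [Finite ι] [Nonempty κ]
    {K : κ → Set X} (hdir : Directed (· ⊇ ·) K) (hcomp : ∀ n, IsCompact (K n)) {p : ι → X}
    (hp : ∀ j n, p j ∈ K n)
    (hinj : Function.Injective fun j => connectedComponentIn (⋂ n, K n) (p j)) :
    ∃ n, Function.Injective fun j => connectedComponentIn (K n) (p j) := by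
  have hsep : ∀ q : ι × ι, ∃ n, q.1 ≠ q.2 → p q.2 ∉ connectedComponentIn (K n) (p q.1) := by
    rintro ⟨i, j⟩
    by_contra! h
    refine (h (Classical.arbitrary κ)).1 (hinj (connectedComponentIn_eq ?_))
    rw [connectedComponentIn_iInter_of_directed hdir hcomp (hp i)]
    exact Set.mem_iInter.2 fun n => (h n).2
  choose level hlevel using hsep
  obtain ⟨n, hn⟩ := hdir.finite_le level
  refine ⟨n, fun i j hij => ?_⟩
  by_contra hne
  exact hlevel (i, j) hne <| connectedComponentIn_mono _ (hn (i, j)) <|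
    (connectedComponentIn_eq_iff (hp j n)).1 hij

theorem exists_pos_injective_connectedComponentIn_sublevel [T2Space X] {ι : Type*} [Finite ι]
    {B : Set X} (hB : IsCompact B) {g : X → ℝ} (hg : Continuous g) {p : ι → X}
    (hp : ∀ j, p j ∈ {x ∈ B | g x ≤ 0})
    (hinj : Function.Injective fun j => connectedComponentIn {x ∈ B | g x ≤ 0} (p j)) :
    ∃ δ > 0, Function.Injective fun j => connectedComponentIn {x ∈ B | g x ≤ δ} (p j) := by
  let K (δ : Set.Ioi (0 : ℝ)) : Set X := {x ∈ B | g x ≤ δ}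
  have hmono : Monotone K := fun _ _ h _ hx => ⟨hx.1, hx.2.trans h⟩
  have hcomp (δ) : IsCompact (K δ) := hB.inter_right (isClosed_le hg continuous_const)
  have hinter : ⋂ δ, K δ = {x ∈ B | g x ≤ 0} := by
    ext x
    refine ⟨fun hx => ?_, fun hx => Set.mem_iInter.2 fun δ => ⟨hx.1, hx.2.trans (le_of_lt δ.2)⟩⟩
    have hx' (δ : ℝ) (hδ : 0 < δ) : x ∈ K ⟨δ, hδ⟩ := Set.mem_iInter.1 hx ⟨δ, hδ⟩
    exact ⟨(hx' 1 one_pos).1, le_of_forall_gt_imp_ge_of_dense fun δ hδ => (hx' δ hδ).2⟩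
  obtain ⟨δ, hδ⟩ := exists_injective_connectedComponentIn hmono.directed_ge hcomp
    (fun j δ => ⟨(hp j).1, (hp j).2.trans (le_of_lt δ.2)⟩) (hinter ▸ hinj)
  exact ⟨δ, δ.2, hδ⟩

theorem injective_connectedComponentIn_image {Y ι : Type*} [TopologicalSpace Y] (h : X ≃ₜ Y)
    {S : Set X} {p : ι → X} (hp : ∀ j, p j ∈ S)
    (hinj : Function.Injective fun j => connectedComponentIn S (p j)) :
    Function.Injective fun j => connectedComponentIn (h '' S) (h (p j)) := by
  simp only [← h.image_connectedComponentIn (hp _)]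
  exact h.injective.image_injective.comp hinj

theorem injective_connectedComponentIn_surjInv (V : Set X) :
    Function.Injective fun c : ConnectedComponents V =>
      connectedComponentIn V (Function.surjInv ConnectedComponents.surjective_coe c : V) := by
  intro c c' h
  dsimp only at h
  rw [connectedComponentIn_eq_image (Subtype.coe_prop _),
    connectedComponentIn_eq_image (Subtype.coe_prop _)] at h
  have h' := Subtype.val_injective.image_injective h
  rw [← Function.surjInv_eq ConnectedComponents.surjective_coe c,
    ← Function.surjInv_eq ConnectedComponents.surjective_coe c']
  exact ConnectedComponents.coe_eq_coe.2 h'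

end Components

section CriticalPoints

theorem exists_pos_add_smul_mem_connectedComponentIn {E : Type*} [AddCommGroup E] [Module ℝ E]
    [TopologicalSpace E] [ContinuousAdd E] [ContinuousSMul ℝ E] {S : Set E} {p z v : E}
    (hz : z ∈ connectedComponentIn S p) (hv : ∀ᶠ t in 𝓝[>] (0 : ℝ), z + t • v ∈ S) :
    ∃ t > (0 : ℝ), z + t • v ∈ connectedComponentIn S p := by
  obtain ⟨b, hb, hsub⟩ := mem_nhdsGT_iff_exists_Ioc_subset.1 hv
  have hb' : (0 : ℝ) ≤ b := le_of_lt hb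
  have hconn : IsPreconnected ((fun t : ℝ => z + t • v) '' Set.Icc 0 b) :=
    isPreconnected_Icc.image _ (by fun_prop)
  have hseg : (fun t : ℝ => z + t • v) '' Set.Icc 0 b ⊆ S := by
    rintro _ ⟨t, ht, rfl⟩
    rcases ht.1.eq_or_lt with rfl | hpos
    · simpa using connectedComponentIn_subset S p hz
    · exact hsub ⟨hpos, ht.2⟩
  refine ⟨b, hb, ?_⟩
  rw [connectedComponentIn_eq hz]
  exact hconn.subset_connectedComponentIn ⟨0, by simpa using hb', by simp⟩ hseg
    ⟨b, by simpa using hb', rfl⟩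

variable {E : Type*} [NormedAddCommGroup E] [NormedSpace ℝ E]

/-- The zeros of `G` at which the derivative of `G` vanishes on the kernel of `ℓ`, that is, the
critical points of `ℓ` on the hypersurface `G = 0` together with the singular points of the
latter. -/
def criticalZeros (G : E → ℝ) (ℓ : E →L[ℝ] ℝ) : Set E :=
  {z | G z = 0 ∧ ∀ v, ℓ v = 0 → fderiv ℝ G z v = 0}

theorem criticalZeros_neg (G : E → ℝ) (ℓ : E →L[ℝ] ℝ) :
    criticalZeros G (-ℓ) = criticalZeros G ℓ := by
  simp [criticalZeros]

variable {S : Set E} {G : E → ℝ} {ℓ : E →L[ℝ] ℝ} {p z v : E}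

theorem not_eventually_add_smul_mem_of_isMaxOn (hz : z ∈ connectedComponentIn S p)
    (hmax : IsMaxOn ℓ (connectedComponentIn S p) z) (hv : 0 < ℓ v) :
    ¬ ∀ᶠ t in 𝓝[>] (0 : ℝ), z + t • v ∈ S := by
  intro hS
  obtain ⟨t, ht, hmem⟩ := exists_pos_add_smul_mem_connectedComponentIn hz hS
  have hle : ℓ (z + t • v) ≤ ℓ z := hmax hmem
  rw [map_add, map_smul, smul_eq_mul] at hle
  linarith [mul_pos ht hv]

theorem exists_apply_pos_of_ne_zero (hℓ : ℓ ≠ 0) : ∃ u, 0 < ℓ u := by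
  obtain ⟨u, hu⟩ := DFunLike.ne_iff.1 hℓ
  rcases lt_or_gt_of_ne hu with hneg | hpos
  · exact ⟨-u, by simpa using hneg⟩
  · exact ⟨u, hpos⟩

theorem eq_zero_of_isMaxOn_component (hG : ContinuousAt G z) (hℓ : ℓ ≠ 0)
    (hz : z ∈ connectedComponentIn {x | G x ≤ 0} p)
    (hmax : IsMaxOn ℓ (connectedComponentIn {x | G x ≤ 0} p) z) : G z = 0 := by
  obtain ⟨u, hu⟩ := exists_apply_pos_of_ne_zero hℓ
  by_contra hne
  have hlt : G z < 0 := lt_of_le_of_ne (connectedComponentIn_subset {x | G x ≤ 0} p hz) hne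
  refine not_eventually_add_smul_mem_of_isMaxOn hz hmax hu ?_
  have hline : Tendsto (fun t : ℝ => z + t • u) (𝓝[>] 0) (𝓝 z) :=
    ((by fun_prop : Continuous fun t : ℝ => z + t • u).tendsto' 0 z (by simp)).mono_left
      nhdsWithin_le_nhds
  exact (hG.tendsto.comp hline).eventually_le_const hlt

theorem fderiv_nonneg_of_isMaxOn_component (hG : DifferentiableAt ℝ G z) (hGz : G z = 0)
    (hz : z ∈ connectedComponentIn {x | G x ≤ 0} p)
    (hmax : IsMaxOn ℓ (connectedComponentIn {x | G x ≤ 0} p) z) (hv : 0 < ℓ v) :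
    0 ≤ fderiv ℝ G z v := by
  by_contra! hneg
  refine not_eventually_add_smul_mem_of_isMaxOn hz hmax hv ?_
  have hslope := (hG.hasFDerivAt.hasLineDerivAt v).tendsto_slope_zero_right
  filter_upwards [hslope.eventually_lt_const hneg, self_mem_nhdsWithin] with t hlt ht
  rw [hGz, sub_zero, smul_eq_mul] at hlt
  exact (neg_of_mul_neg_right hlt (inv_nonneg.2 (le_of_lt ht))).le

theorem mem_criticalZeros_of_isMaxOn_component (hG : DifferentiableAt ℝ G z) (hℓ : ℓ ≠ 0)
    (hz : z ∈ connectedComponentIn {x | G x ≤ 0} p)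
    (hmax : IsMaxOn ℓ (connectedComponentIn {x | G x ≤ 0} p) z) : z ∈ criticalZeros G ℓ := by
  have hGz := eq_zero_of_isMaxOn_component hG.continuousAt hℓ hz hmax
  refine ⟨hGz, fun v hv => ?_⟩
  obtain ⟨u, hu⟩ := exists_apply_pos_of_ne_zero hℓ
  have hnonneg : ∀ c : ℝ, 0 ≤ fderiv ℝ G z u + c * fderiv ℝ G z v := fun c => by
    simpa using fderiv_nonneg_of_isMaxOn_component hG hGz hz hmax (v := u + c • v) (by simpa [hv])
  by_contra hne
  have := hnonneg (-(1 + fderiv ℝ G z u) / fderiv ℝ G z v)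
  rw [div_mul_cancel₀ _ hne] at this
  linarith

theorem exists_mem_criticalZeros (hG : Differentiable ℝ G) (hcomp : IsCompact {x | G x ≤ 0})
    (hℓ : ℓ ≠ 0) (hp : G p < 0) :
    ∃ z ∈ criticalZeros G ℓ, z ∈ connectedComponentIn {x | G x ≤ 0} p ∧ ℓ p < ℓ z := by
  have hmem : p ∈ connectedComponentIn {x | G x ≤ 0} p := mem_connectedComponentIn hp.le
  have hcomp' : IsCompact (connectedComponentIn {x | G x ≤ 0} p) :=
    hcomp.of_isClosed_subset (isClosed_connectedComponentIn hcomp.isClosed p)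
      (connectedComponentIn_subset _ _)
  obtain ⟨z, hz, hmax⟩ := hcomp'.exists_isMaxOn ⟨p, hmem⟩ ℓ.continuous.continuousOn
  refine ⟨z, mem_criticalZeros_of_isMaxOn_component (hG z) hℓ hz hmax, hz, ?_⟩
  refine lt_of_le_of_ne (hmax hmem) fun heq => hp.ne ?_
  exact eq_zero_of_isMaxOn_component (hG p).continuousAt hℓ hmem fun x hx =>
    (hmax hx).trans heq.ge

theorem two_mul_card_le_encard_criticalZeros {ι : Type*} (hG : Differentiable ℝ G)
    (hcomp : IsCompact {x | G x ≤ 0}) (hℓ : ℓ ≠ 0) {p : ι → E} (hp : ∀ j, G (p j) < 0)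
    (hinj : Function.Injective fun j => connectedComponentIn {x | G x ≤ 0} (p j)) :
    2 * ENat.card ι ≤ (criticalZeros G ℓ).encard := by
  choose top htop htop_mem htop_lt using fun j => exists_mem_criticalZeros hG hcomp hℓ (hp j)
  choose bot hbot hbot_mem hbot_lt using fun j =>
    exists_mem_criticalZeros hG hcomp (neg_ne_zero.2 hℓ) (hp j)
  have index_eq {i j : ι} {z : E} (hi : z ∈ connectedComponentIn {x | G x ≤ 0} (p i))
      (hj : z ∈ connectedComponentIn {x | G x ≤ 0} (p j)) : i = j :=
    hinj ((connectedComponentIn_eq hi).trans (connectedComponentIn_eq hj).symm)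
  have hext : Function.Injective (Sum.elim top bot) := by
    refine Function.Injective.sumElim (fun i j h => index_eq (htop_mem i) (h ▸ htop_mem j))
      (fun i j h => index_eq (hbot_mem i) (h ▸ hbot_mem j)) fun i j h => ?_
    obtain rfl : i = j := index_eq (htop_mem i) (h ▸ hbot_mem j)
    have hlt := hbot_lt i
    rw [← h] at hlt
    exact lt_asymm (htop_lt i) (neg_lt_neg_iff.1 hlt)
  calc 2 * ENat.card ι = ENat.card (ι ⊕ ι) := by rw [ENat.card_sum, two_mul]
    _ ≤ (Set.range (Sum.elim top bot)).encard := hext.encard_range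
    _ ≤ (criticalZeros G ℓ).encard := by
      refine Set.encard_le_encard (Set.range_subset_iff.2 ?_)
      rintro (j | j)
      · exact htop j
      · exact criticalZeros_neg G ℓ ▸ hbot j

end CriticalPoints

section CriticalSystem

theorem hasFDerivAt_eval {σ 𝕜 : Type*} [Fintype σ] [NontriviallyNormedField 𝕜]
    (p : MvPolynomial σ 𝕜) (x : σ → 𝕜) :
    HasFDerivAt (fun y => eval y p)
      (∑ i, eval x (pderiv i p) • (ContinuousLinearMap.proj i : (σ → 𝕜) →L[𝕜] 𝕜)) x := by
  classical
  induction p using MvPolynomial.induction_on with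
  | C a =>
    simp only [eval_C]
    exact (hasFDerivAt_const a x).congr_fderiv (by ext; simp)
  | add p q hp hq =>
    simp only [map_add]
    exact (hp.add hq).congr_fderiv (by ext; simp [add_mul, Finset.sum_add_distrib])
  | mul_X p j hp =>
    simp only [map_mul, eval_X]
    refine (hp.mul (ContinuousLinearMap.proj (R := 𝕜) j).hasFDerivAt).congr_fderiv ?_
    ext v
    simp [pderiv_X, Pi.single_apply, apply_ite, ite_mul, add_mul, Finset.sum_add_distrib,
      Finset.mul_sum, mul_assoc]

theorem fderiv_eval_single {σ 𝕜 : Type*} [Finite σ] [DecidableEq σ] [NontriviallyNormedField 𝕜]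
    (p : MvPolynomial σ 𝕜) (x : σ → 𝕜) (i : σ) :
    fderiv 𝕜 (fun y => eval y p) x (Pi.single i 1) = eval x (pderiv i p) := by
  have := Fintype.ofFinite σ
  simp [(hasFDerivAt_eval p x).fderiv, Pi.single_apply]

variable {σ K : Type*} [Fintype σ] [Field K] {F : MvPolynomial σ K} {D : ℕ} {δ ε : K}

/-- The perturbation `F + ε * ∑ i, X i ^ (D + 1) - δ` of `F`. Over `ℝ`, with `F ≥ 0`, `D` odd and
`ε, δ > 0`, its nonpositive set is a compact approximation of the zero set of `F`. -/
noncomputable def perturbation (F : MvPolynomial σ K) (D : ℕ) (δ ε : K) : MvPolynomial σ K :=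
  F + C ε * psum σ K (D + 1) - C δ

theorem eval_perturbation (z : σ → K) :
    eval z (perturbation F D δ ε) = eval z F + ε * ∑ i, z i ^ (D + 1) - δ := by
  simp [perturbation, psum]

theorem eval_pderiv_perturbation (z : σ → K) (j : σ) :
    eval z (pderiv j (perturbation F D δ ε)) = eval z (pderiv j F) + ε * ((D + 1) * z j ^ D) := by
  classical
  simp [perturbation, psum, pderiv_X, Pi.single_apply]

variable [DecidableEq σ] {i₀ : σ}

/-- The polynomials `f i` for which the critical point equations of `X i₀` on the hypersurface
`perturbation F D δ ε = 0` take the form `f i = ε * X i ^ e i`, with `e i = D` for `i ≠ i₀` and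
`e i₀ = D + 1`. The equation for `i₀` is that of the hypersurface with the other powers eliminated;
this makes `f` independent of `ε`. -/
noncomputable def criticalSystem (F : MvPolynomial σ K) (D : ℕ) (i₀ : σ) (δ : K) :
    σ → MvPolynomial σ K :=
  let h (j : σ) : MvPolynomial σ K := C (-(D + 1 : K)⁻¹) * pderiv j F
  Function.update h i₀ (C δ - F - ∑ j ∈ Finset.univ.erase i₀, X j * h j)

theorem totalDegree_criticalSystem_le (hF : F.totalDegree ≤ D + 1) (i : σ) :
    (criticalSystem F D i₀ δ i).totalDegree ≤ Function.update (fun _ => D) i₀ (D + 1) i := by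
  have hh (j : σ) : (C (-(D + 1 : K)⁻¹) * pderiv j F).totalDegree ≤ D := by
    grw [totalDegree_mul, totalDegree_C, totalDegree_pderiv_le, hF]
    simp
  rcases eq_or_ne i i₀ with rfl | hi
  · simp only [criticalSystem, Function.update_self]
    refine (totalDegree_sub _ _).trans (max_le ((totalDegree_sub _ _).trans (max_le ?_ hF)) ?_)
    · simp
    · refine totalDegree_finsetSum_le fun j _ => ?_
      grw [totalDegree_mul, totalDegree_X, hh, add_comm]
  · simpa only [criticalSystem, Function.update_of_ne hi] using hh i

theorem eval_criticalSystem [CharZero K] {z : σ → K} (hz : eval z (perturbation F D δ ε) = 0)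
    (hcrit : ∀ j ≠ i₀, eval z (pderiv j (perturbation F D δ ε)) = 0) (i : σ) :
    eval z (criticalSystem F D i₀ δ i) =
      ε * z i ^ Function.update (fun _ => D) i₀ (D + 1) i := by
  have hD : (D + 1 : K) ≠ 0 := D.cast_add_one_ne_zero
  have hh (j : σ) (hj : j ≠ i₀) : eval z (C (-(D + 1 : K)⁻¹) * pderiv j F) = ε * z j ^ D := by
    have := hcrit j hj
    rw [eval_pderiv_perturbation] at this
    rw [map_mul, eval_C, eq_neg_of_add_eq_zero_left this]
    field_simp
  rcases eq_or_ne i i₀ with rfl | hi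
  · have hsum : ∑ j ∈ Finset.univ.erase i, z j * eval z (C (-(D + 1 : K)⁻¹) * pderiv j F) =
        ε * ∑ j ∈ Finset.univ.erase i, z j ^ (D + 1) := by
      rw [Finset.mul_sum]
      refine Finset.sum_congr rfl fun j hj => ?_
      rw [hh j (Finset.ne_of_mem_erase hj)]
      ring
    rw [eval_perturbation, ← Finset.add_sum_erase _ _ (Finset.mem_univ i)] at hz
    simp only [criticalSystem, Function.update_self, map_sub, eval_C, map_sum,
      map_mul (eval z) (X _), eval_X, hsum]
    linear_combination -hz
  · simpa only [criticalSystem, Function.update_of_ne hi] using hh i hi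

end CriticalSystem

section Counting

theorem isCompact_setOf_sum_pow_le {σ : Type*} [Fintype σ] {n : ℕ} (hn : Even n) (hn₀ : n ≠ 0)
    (c : ℝ) : IsCompact {x : σ → ℝ | ∑ i, x i ^ n ≤ c} := by
  have hclosed : IsClosed {x : σ → ℝ | ∑ i, x i ^ n ≤ c} :=
    isClosed_le (by fun_prop) continuous_const
  refine (isCompact_Icc (a := fun _ => -max 1 c) (b := fun _ => max 1 c)).of_isClosed_subset
    hclosed fun x hx => ?_
  have hbound (i : σ) : |x i| ≤ max 1 c := by
    rcases le_total |x i| 1 with h | h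
    · exact h.trans (le_max_left _ _)
    · calc |x i| ≤ |x i| ^ n := le_self_pow₀ h hn₀
        _ = x i ^ n := hn.pow_abs _
        _ ≤ ∑ i, x i ^ n :=
          Finset.single_le_sum (fun j _ => hn.pow_nonneg (x j)) (Finset.mem_univ i)
        _ ≤ max 1 c := le_max_of_le_right hx
  exact ⟨fun i => (abs_le.1 (hbound i)).1, fun i => (abs_le.1 (hbound i)).2⟩

variable {σ : Type*} [Fintype σ] {F : MvPolynomial σ ℝ} {D : ℕ}

theorem finite_setOf_lt_encard_criticalZeros (hF : F.totalDegree ≤ D + 1) (i₀ : σ) (δ : ℝ) :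
    {ε : ℝ | ((D + 1) * D ^ (Fintype.card σ - 1) : ℕ) <
      (criticalZeros (fun x => eval x (perturbation F D δ ε))
        (ContinuousLinearMap.proj i₀)).encard}.Finite := by
  classical
  have hprod : ∏ i, Function.update (fun _ => D) i₀ (D + 1) i =
      (D + 1) * D ^ (Fintype.card σ - 1) := by
    rw [Finset.prod_update_of_mem (Finset.mem_univ i₀), Finset.prod_const,
      Finset.card_sdiff_of_subset (Finset.subset_univ _), Finset.card_singleton, Finset.card_univ]
  have hbezout := finite_setOf_prod_lt_encard
    (totalDegree_criticalSystem_le (i₀ := i₀) (δ := δ) hF)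
  rw [hprod] at hbezout
  refine hbezout.subset fun ε hε => lt_of_lt_of_le hε (Set.encard_le_encard ?_)
  rintro z ⟨hz, hker⟩
  refine eval_criticalSystem hz fun j hj => ?_
  rw [← fderiv_eval_single]
  exact hker _ (by simp [hj.symm])

theorem setOf_eval_perturbation_le_zero_subset (hF : ∀ x, 0 ≤ eval x F) (hD : Odd D) {δ ε c : ℝ}
    (hε : 0 < ε) (hδ : δ ≤ ε * c) :
    {x | eval x (perturbation F D δ ε) ≤ 0} ⊆
      {x ∈ {x : σ → ℝ | ∑ i, x i ^ (D + 1) ≤ c} | eval x F ≤ δ} := by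
  intro x hx
  rw [Set.mem_ofPred_eq, eval_perturbation] at hx
  have hsum : 0 ≤ ∑ i, x i ^ (D + 1) := Finset.sum_nonneg fun i _ => hD.add_one.pow_nonneg (x i)
  exact ⟨le_of_mul_le_mul_left (by linarith [hF x]) hε, by linarith [mul_nonneg hε.le hsum]⟩

theorem two_mul_card_le_of_injective_connectedComponentIn_sublevel [Nonempty σ] {ι : Type*}
    [Finite ι] (hF : ∀ x, 0 ≤ eval x F) (hdeg : F.totalDegree ≤ D + 1) (hD : Odd D)
    {p : ι → σ → ℝ} (hp : ∀ j, eval (p j) F = 0) {δ r c : ℝ} (hδ : 0 < δ) (hr : 0 < r)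
    (hrc : r < c) (hpr : ∀ j, ∑ i, p j i ^ (D + 1) ≤ r)
    (hinj : Function.Injective fun j => connectedComponentIn
      {x ∈ {x : σ → ℝ | ∑ i, x i ^ (D + 1) ≤ c} | eval x F ≤ δ} (p j)) :
    2 * Nat.card ι ≤ (D + 1) * D ^ (Fintype.card σ - 1) := by
  let i₀ : σ := Classical.arbitrary σ
  obtain ⟨ε, ⟨hδc, hδr⟩, hgeneric⟩ := ((Set.Ioo_infinite
    (div_lt_div_of_pos_left hδ hr hrc)).sdiff
      (finite_setOf_lt_encard_criticalZeros hdeg i₀ δ)).nonempty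
  rw [div_lt_iff₀ (hr.trans hrc)] at hδc
  rw [lt_div_iff₀ hr] at hδr
  have hε : 0 < ε := pos_of_mul_pos_left (hδ.trans hδc) (hr.trans hrc).le
  have hsub := setOf_eval_perturbation_le_zero_subset hF hD hε hδc.le
  have hdiff : Differentiable ℝ fun x : σ → ℝ => eval x (perturbation F D δ ε) :=
    fun x => (hasFDerivAt_eval _ x).differentiableAt
  have hcomp : IsCompact {x : σ → ℝ | eval x (perturbation F D δ ε) ≤ 0} :=
    (isCompact_setOf_sum_pow_le hD.add_one D.succ_ne_zero c).of_isClosed_subset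
      (isClosed_le hdiff.continuous continuous_const) fun x hx => (hsub hx).1
  have hneg (j : ι) : eval (p j) (perturbation F D δ ε) < 0 := by
    rw [eval_perturbation, hp j]
    linarith [mul_le_mul_of_nonneg_left (hpr j) hε.le]
  have hproj : (ContinuousLinearMap.proj i₀ : (σ → ℝ) →L[ℝ] ℝ) ≠ 0 :=
    fun h => one_ne_zero (α := ℝ) (DFunLike.congr_fun h 1)
  have hcount := (two_mul_card_le_encard_criticalZeros hdiff hcomp hproj hneg
    (injective_connectedComponentIn_of_subset hsub (fun j => (hneg j).le) hinj)).trans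
      (not_lt.1 hgeneric)
  rw [ENat.card_eq_coe_natCard] at hcount
  exact_mod_cast hcount

theorem two_mul_card_le_of_injective_connectedComponentIn_zeros [Nonempty σ] {ι : Type*} [Finite ι]
    (hF : ∀ x, 0 ≤ eval x F) (hdeg : F.totalDegree ≤ D + 1) (hD : Odd D) {p : ι → σ → ℝ}
    (hp : ∀ j, eval (p j) F = 0)
    (hinj : Function.Injective fun j => connectedComponentIn {x | eval x F ≤ 0} (p j)) :
    2 * Nat.card ι ≤ (D + 1) * D ^ (Fintype.card σ - 1) := by
  obtain ⟨M, hM⟩ := (Set.finite_range fun j => ∑ i, p j i ^ (D + 1)).bddAbove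
  have hpr (j : ι) : ∑ i, p j i ^ (D + 1) ≤ max M 1 := le_max_of_le_left (hM ⟨j, rfl⟩)
  have hr : 0 < max M 1 := lt_max_of_lt_right one_pos
  have hrc : max M 1 < 2 * max M 1 := by linarith
  have hmem (j : ι) :
      p j ∈ {x ∈ {x : σ → ℝ | ∑ i, x i ^ (D + 1) ≤ 2 * max M 1} | eval x F ≤ 0} :=
    ⟨(hpr j).trans hrc.le, (hp j).le⟩
  obtain ⟨δ, hδ, hinjδ⟩ := exists_pos_injective_connectedComponentIn_sublevel
    (isCompact_setOf_sum_pow_le hD.add_one D.succ_ne_zero _) (continuous_eval F) hmem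
    (injective_connectedComponentIn_of_subset (fun _ hx => hx.2) hmem hinj)
  exact two_mul_card_le_of_injective_connectedComponentIn_sublevel hF hdeg hD hp hδ hr hrc hpr
    hinjδ

theorem exists_nonneg_eval_le_zero_iff {σ ι : Type*} [Finite σ] {f : ι → MvPolynomial σ ℝ} {d : ℕ}
    (hf : ∀ i, (f i).totalDegree ≤ d) :
    ∃ F : MvPolynomial σ ℝ, F.totalDegree ≤ 2 * d ∧ (∀ x, 0 ≤ eval x F) ∧
      ∀ x, eval x F ≤ 0 ↔ ∀ i, eval x (f i) = 0 := by
  obtain ⟨s, hs, hspan⟩ := (Submodule.fg_span_iff_fg_span_finset_subset (Set.range f)).1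
    (IsNoetherian.noetherian (Ideal.span (Set.range f)))
  have heval (x : σ → ℝ) : eval x (∑ g ∈ s, g ^ 2) = ∑ g ∈ s, eval x g ^ 2 := by
    simp only [map_sum, map_pow]
  have hnonneg (x : σ → ℝ) : 0 ≤ eval x (∑ g ∈ s, g ^ 2) := by
    rw [heval]
    exact Finset.sum_nonneg fun g _ => sq_nonneg _
  refine ⟨∑ g ∈ s, g ^ 2, totalDegree_finsetSum_le fun g hg => ?_, hnonneg, fun x => ?_⟩
  · obtain ⟨i, rfl⟩ := hs hg
    exact (totalDegree_pow _ _).trans (Nat.mul_le_mul_left 2 (hf i))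
  · calc eval x (∑ g ∈ s, g ^ 2) ≤ 0 ↔ ∀ g ∈ s, eval x g = 0 := by
          rw [(hnonneg x).ge_iff_eq', heval,
            Finset.sum_eq_zero_iff_of_nonneg fun g _ => sq_nonneg _]
          simp only [sq_eq_zero_iff]
      _ ↔ Ideal.span (s : Set (MvPolynomial σ ℝ)) ≤ RingHom.ker (eval x) := by
        rw [Ideal.span_le]
        rfl
      _ ↔ Ideal.span (Set.range f) ≤ RingHom.ker (eval x) := by rw [Ideal.span, ← hspan, Ideal.span]
      _ ↔ ∀ i, eval x (f i) = 0 := Ideal.span_le.trans Set.range_subset_iff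

theorem card_le_of_injective_connectedComponentIn_zeroLocus {σ ι κ : Type*} [Fintype σ]
    [Nonempty σ] [Finite κ] {d : ℕ} (hd : 1 ≤ d) {f : ι → MvPolynomial σ ℝ}
    (hf : ∀ i, (f i).totalDegree ≤ d) {p : κ → σ → ℝ} (hp : ∀ j i, eval (p j) (f i) = 0)
    (hinj : Function.Injective fun j =>
      connectedComponentIn {x | ∀ i, eval x (f i) = 0} (p j)) :
    Nat.card κ ≤ d * (2 * d - 1) ^ (Fintype.card σ - 1) := by
  obtain ⟨F, hdeg, hnonneg, hzero⟩ := exists_nonneg_eval_le_zero_iff hf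
  simp only [← hzero] at hp hinj
  have hd' : 2 * d - 1 + 1 = 2 * d := by omega
  have hcount := two_mul_card_le_of_injective_connectedComponentIn_zeros hnonneg
    (hdeg.trans hd'.ge) ⟨d - 1, by omega⟩ (fun j => (hp j).antisymm (hnonneg _)) hinj
  rw [hd', mul_assoc] at hcount
  exact Nat.le_of_mul_le_mul_left hcount two_pos

theorem finite_and_card_le_of_forall_finset_card_le {α : Type*} {n : ℕ}
    (h : ∀ s : Finset α, s.card ≤ n) : Finite α ∧ Nat.card α ≤ n := by
  have := fintypeOfFinsetCardLe n h
  exact ⟨inferInstance, Nat.card_eq_fintype_card (α := α) ▸ h Finset.univ⟩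

theorem pomt_bound_general {σ ι : Type*} [Fintype σ] [Nonempty σ] {d : ℕ} (hd : 1 ≤ d)
    (f : ι → MvPolynomial σ ℝ) (hdeg : ∀ i, (f i).totalDegree ≤ d) :
    Finite (ConnectedComponents {x : EuclideanSpace ℝ σ | ∀ i, eval x (f i) = 0}) ∧
    Nat.card (ConnectedComponents {x : EuclideanSpace ℝ σ | ∀ i, eval x (f i) = 0})
      ≤ d * (2 * d - 1) ^ (Fintype.card σ - 1) := by
  refine finite_and_card_le_of_forall_finset_card_le fun s => ?_
  let V := {x : EuclideanSpace ℝ σ | ∀ i, eval x (f i) = 0}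
  let p (c : s) : V := Function.surjInv ConnectedComponents.surjective_coe c.1
  let toPi := (EuclideanSpace.equiv σ ℝ).toHomeomorph
  have himage : toPi '' V = {x | ∀ i, eval x (f i) = 0} := toPi.image_eq_preimage_symm V
  have hinj := injective_connectedComponentIn_image toPi (fun c => (p c).2)
    ((injective_connectedComponentIn_surjInv V).comp Subtype.val_injective)
  rw [himage] at hinj
  simpa using card_le_of_injective_connectedComponentIn_zeroLocus hd hdeg
    (fun c => (p c).2) hinj

end Counting

/-- Petrovskii–Oleinik–Milnor–Thom bound: the common zero set in `ℝ^N` of `k` real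
polynomials of total degree at most `d` has at most `d * (2d-1)^(N-1)` connected
components (in the Euclidean subspace topology). -/
theorem pomt_bound (N d k : ℕ) (hN : 1 ≤ N) (hd : 1 ≤ d) (hk : 1 ≤ k)
    (f : Fin k → MvPolynomial (Fin N) ℝ)
    (hdeg : ∀ i, (f i).totalDegree ≤ d) :
    Finite (ConnectedComponents
      ↥{x : EuclideanSpace ℝ (Fin N) | ∀ i, MvPolynomial.eval x (f i) = 0}) ∧
    Nat.card (ConnectedComponents
      ↥{x : EuclideanSpace ℝ (Fin N) | ∀ i, MvPolynomial.eval x (f i) = 0})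
      ≤ d * (2 * d - 1) ^ (N - 1) := by
  have : Nonempty (Fin N) := Fin.pos_iff_nonempty.1 hN
  simpa only [Fintype.card_fin] using pomt_bound_general hd f hdeg
end

section
/- There exists an absolute constant C > 0 with the following property. Let d ≥ 1 and n_1, …, n_d ≥ 2 be integers, let r ≥ 1 be an integer, let t > 0 and 0 < ε ≤ 2t. Let V be the set of tensors T ∈ ℝ^{n_1×⋯×n_d} of CP rank at most r with Frobenius norm ‖T‖_F ≤ t. Then there exists a finite subset F ⊆ V with log |F| ≤ r·(Σ_{i=1}^d n_i)·log(t/ε) + C·r·(Σ_{i=1}^d n_i)·(Σ_{i=1}^d log n_i) such that every T ∈ V lies within Frobenius distance ε of some element of F. -/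
/-- A tensor `T ∈ ℝ^{n₁ × ⋯ × n_d}` has CP rank at most `r` if it is a sum of `r`
rank-one (elementary) tensors. -/
def CPRankLE {d : ℕ} {n : Fin d → ℕ} (r : ℕ)
    (T : EuclideanSpace ℝ ((i : Fin d) → Fin (n i))) : Prop :=
  ∃ a : Fin r → (i : Fin d) → Fin (n i) → ℝ,
    ∀ k : (i : Fin d) → Fin (n i), T k = ∑ j : Fin r, ∏ i : Fin d, a j i (k i)

/-!
Packing beats parameter counting: let `φ : ℝ^σ → ℝ^ι` be a polynomial map of degree at most `δ` in
each variable, with `p = #σ`, and let `Y` be an `ε`-separated subset of its image, of diameter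
at most `D`. For a univariate polynomial `q`, the polynomials `a ↦ q(‖y - φ a‖²)`, `y ∈ Y`, have
degree at most `2δ deg q` in each variable. If `q(0) = 1` and `q` is so small at the nonzero
squared distances in `Y` that the matrix `q(‖y - z‖²)` is strictly diagonally dominant, these
polynomials are linearly independent, whence `#Y ≤ (2δ deg q + 1)^p`.

Take `q` to be a power of a rescaled Chebyshev kernel, for which `|q(ρ²)| ≤ (D / (m ρ))^(2k)` when
`deg q ≤ k m`. Bounding every off-diagonal entry by its value at `ρ = ε` forces `m` to be of order
`(D/ε)²` and gives only `#Y ≤ (5δp D/ε)^(2p)`. Applied inside balls around `y`, this crude bound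
controls the rank `j` of a point `z` in the order of distance to `y`: with `k = 2p` and `m` of
order `D/ε`, the entry at `(y, z)` is at most `1 / (4j²)`. Since `∑ 1/j² ≤ 2`, the matrix is again
dominant, which yields the right exponent `p`. A maximal `ε`-separated subset is an `ε`-net.
-/

open Finset Metric
open scoped NNReal

section ChebyshevKernel

open Polynomial

/-- The polynomial `(1 - Tₘ(1 - 2s)) / (2 m² s)`, an algebraic analogue of the Fejér kernel: it
equals `1` at `s = 0` and decays like `1 / (m² s)` on `(0, 1]`. The division by `s` is `divX`. -/
noncomputable def chebyshevKernel (m : ℕ) : ℝ[X] :=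
  C (1 / (2 * (m : ℝ) ^ 2)) * (1 - (Chebyshev.T ℝ m).comp (1 - C 2 * X)).divX

lemma natDegree_chebyshevKernel_le (m : ℕ) : (chebyshevKernel m).natDegree ≤ m := by
  have hlin : (1 - C 2 * X : ℝ[X]).natDegree ≤ 1 := by compute_degree
  calc (chebyshevKernel m).natDegree
      ≤ (1 - (Chebyshev.T ℝ m).comp (1 - C 2 * X)).natDegree :=
        (natDegree_C_mul_le _ _).trans natDegree_divX_le
    _ ≤ ((Chebyshev.T ℝ m).comp (1 - C 2 * X)).natDegree := by
        simpa using natDegree_sub_le (1 : ℝ[X]) ((Chebyshev.T ℝ m).comp (1 - C 2 * X))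
    _ ≤ m := by
        rw [natDegree_comp, Chebyshev.natDegree_T, Int.natAbs_natCast]
        exact mul_le_of_le_one_right' hlin

lemma eval_zero_chebyshevKernel {m : ℕ} (hm : m ≠ 0) : (chebyshevKernel m).eval 0 = 1 := by
  have hdivX (p : ℝ[X]) : p.divX.eval 0 = (derivative p).eval 0 := by
    simp [← coeff_zero_eq_eval_zero, coeff_derivative]
  have hm' : (m : ℝ) ≠ 0 := Nat.cast_ne_zero.2 hm
  rw [chebyshevKernel, eval_mul, eval_C, hdivX]
  simp [derivative_comp, Chebyshev.derivative_T_eval_one]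
  field_simp

lemma abs_eval_chebyshevKernel_le (m : ℕ) {s : ℝ} (hs : 0 < s) (hs1 : s ≤ 1) :
    |(chebyshevKernel m).eval s| ≤ 1 / (m ^ 2 * s) := by
  set W : ℝ[X] := 1 - (Chebyshev.T ℝ m).comp (1 - C 2 * X) with hW
  have hdivX : W.divX.eval s = W.eval s / s := by
    have hW0 : W.coeff 0 = 0 := by simp [hW, coeff_zero_eq_eval_zero]
    have := congrArg (eval s) (divX_mul_X_add W)
    rw [eq_div_iff hs.ne']
    simpa [hW0] using this
  have hW2 : |W.eval s| ≤ 2 := by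
    have hT := Chebyshev.abs_eval_T_real_le_one m (x := 1 - 2 * s)
      (abs_le.2 ⟨by linarith, by linarith⟩)
    calc |W.eval s| = |1 - (Chebyshev.T ℝ m).eval (1 - 2 * s)| := by simp [hW]
      _ ≤ |1| + |(Chebyshev.T ℝ m).eval (1 - 2 * s)| := abs_sub _ _
      _ ≤ 2 := by rw [abs_one]; linarith
  calc |(chebyshevKernel m).eval s| = 1 / (2 * (m : ℝ) ^ 2) * (|W.eval s| / s) := by
        rw [chebyshevKernel, ← hW, eval_mul, eval_C, hdivX, abs_mul,
          abs_of_nonneg (by positivity), abs_div, abs_of_pos hs]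
    _ ≤ 1 / (2 * (m : ℝ) ^ 2) * (2 / s) := by gcongr
    _ = 1 / (m ^ 2 * s) := by field_simp

end ChebyshevKernel

section DiagonalDominance

lemma finrank_restrictDegree (σ R : Type*) [Fintype σ] [CommSemiring R] [StrongRankCondition R]
    (e : ℕ) :
    Module.finrank R (MvPolynomial.restrictDegree σ R e) = (e + 1) ^ Fintype.card σ := by
  classical
  have exponents : {f : σ →₀ ℕ | ∀ i, f i ≤ e} ≃ (σ → {b : ℕ // b ≤ e}) :=
    (Finsupp.equivFunOnFinite.subtypeEquiv fun _ ↦ Iff.rfl).trans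
      (Equiv.subtypePiEquivPi (p := fun _ b ↦ b ≤ e))
  calc Module.finrank R (MvPolynomial.restrictDegree σ R e)
      = Nat.card {f : σ →₀ ℕ | ∀ i, f i ≤ e} :=
        Module.finrank_eq_nat_card_basis (MvPolynomial.basisRestrictSupport R _)
    _ = Nat.card (σ → {b : ℕ // b ≤ e}) := Nat.card_congr exponents
    _ = (e + 1) ^ Fintype.card σ := by
        rw [Nat.card_fun, Nat.subtype_card (Iic e) fun _ ↦ mem_Iic, Nat.card_Iic,
          Nat.card_eq_fintype_card]

lemma linearIndependent_of_sum_erase_lt {K M κ : Type*} [NormedField K] [AddCommGroup M]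
    [Module K M] [Fintype κ] [DecidableEq κ] {v : κ → M} (f : κ → M →ₗ[K] K)
    (h : ∀ i, ∑ j ∈ univ.erase i, ‖f j (v i)‖ < ‖f i (v i)‖) :
    LinearIndependent K v :=
  .of_comp (LinearMap.pi f) <| Matrix.linearIndependent_rows_of_det_ne_zero
    (A := Matrix.of fun i j ↦ f j (v i)) (det_ne_zero_of_sum_row_lt_diag h)

lemma degreeOf_aeval_le {σ R : Type*} [CommSemiring R] (v : σ) (S : MvPolynomial σ R)
    (q : Polynomial R) :
    (Polynomial.aeval S q).degreeOf v ≤ q.natDegree * S.degreeOf v := by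
  rw [Polynomial.aeval_eq_sum_range]
  refine (MvPolynomial.degreeOf_sum_le _ _ _).trans (Finset.sup_le fun k hk ↦ ?_)
  rw [MvPolynomial.smul_eq_C_mul]
  calc (MvPolynomial.C (q.coeff k) * S ^ k).degreeOf v
      ≤ (S ^ k).degreeOf v := MvPolynomial.degreeOf_C_mul_le _ _ _
    _ ≤ k * S.degreeOf v := MvPolynomial.degreeOf_pow_le _ _ _
    _ ≤ q.natDegree * S.degreeOf v := Nat.mul_le_mul_right _ (mem_range_succ_iff.1 hk)

end DiagonalDominance

section RankSum

lemma sum_card_filter_le {α β N : Type*} [LinearOrder β] [AddCommMonoid N] [PartialOrder N]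
    [IsOrderedAddMonoid N] {g : ℕ → N} (hg : AntitoneOn g (Set.Ici 1)) (f : α → β)
    (s : Finset α) :
    ∑ z ∈ s, g (#{w ∈ s | f w ≤ f z}) ≤ ∑ j ∈ range #s, g (j + 1) := by
  classical
  induction s using Finset.induction_on_max_value f with
  | empty => simp
  | insert a s ha hmax ih =>
    have htop : #{w ∈ insert a s | f w ≤ f a} = #s + 1 := by
      rw [filter_true_of_mem (by simpa using hmax), card_insert_of_notMem ha]
    rw [sum_insert ha, htop, card_insert_of_notMem ha, sum_range_succ, add_comm]
    gcongr
    refine (sum_le_sum fun z hz ↦ hg ?_ ?_ ?_).trans ih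
    · exact card_pos.2 ⟨z, by simp [hz]⟩
    · exact card_pos.2 ⟨z, by simp [hz]⟩
    · gcongr
      exact subset_insert a s

lemma sum_inv_card_filter_sq_le {α β : Type*} [LinearOrder β] (f : α → β) (s : Finset α) :
    ∑ z ∈ s, ((#{w ∈ s | f w ≤ f z} : ℝ) ^ 2)⁻¹ ≤ 2 := by
  have hanti : AntitoneOn (fun j : ℕ ↦ ((j : ℝ) ^ 2)⁻¹) (Set.Ici 1) := fun i hi j _ hij ↦ by
    have : (0 : ℝ) < i := Nat.cast_pos.2 hi
    dsimp only
    gcongr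
  calc ∑ z ∈ s, ((#{w ∈ s | f w ≤ f z} : ℝ) ^ 2)⁻¹
      ≤ ∑ j ∈ range #s, (((j + 1 : ℕ) : ℝ) ^ 2)⁻¹ := sum_card_filter_le hanti f s
    _ = ∑ j ∈ Ioo 0 (#s + 1), ((j : ℝ) ^ 2)⁻¹ := by
        rw [range_eq_Ico, sum_Ico_add' (fun j : ℕ ↦ ((j : ℝ) ^ 2)⁻¹)]
        rfl
    _ ≤ 2 := by simpa using sum_Ioo_inv_sq_le (α := ℝ) 0 (#s + 1)

end RankSum

lemma lt_dist_of_isSeparated {X : Type*} [PseudoMetricSpace X] {ε : ℝ≥0} {s : Set X}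
    (hs : IsSeparated ε s) {x y : X} (hx : x ∈ s) (hy : y ∈ s) (hxy : x ≠ y) :
    ε < dist x y := by
  have : (ε : ENNReal) < edist x y := hs hx hy hxy
  rwa [edist_nndist, ENNReal.coe_lt_coe, ← NNReal.coe_lt_coe, coe_nndist] at this

lemma exists_finset_isCover_of_card_le {X : Type*} [PseudoEMetricSpace X] {ε : ℝ≥0} {A : Set X}
    {B : ℕ} (hB : ∀ Y : Finset X, ↑Y ⊆ A → IsSeparated ε (Y : Set X) → #Y ≤ B) :
    ∃ F : Finset X, ↑F ⊆ A ∧ IsSeparated ε (F : Set X) ∧ IsCover ε A F := by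
  have hpack : packingNumber ε A ≤ B := iSup₂_le fun C hCA ↦ iSup_le fun hC ↦ by
    by_contra! hlt
    obtain ⟨Y, hYC, hY⟩ := Set.exists_subset_encard_eq (Order.add_one_le_of_lt hlt)
    have hYfin : Y.Finite := Set.finite_of_encard_eq_coe (k := B + 1) (by simpa using hY)
    lift Y to Finset X using hYfin
    have hYB := hB Y (hYC.trans hCA) (hC.subset hYC)
    rw [Set.encard_coe_eq_coe_finsetCard] at hY
    norm_cast at hY
    lia
  have hfin : packingNumber ε A ≠ ⊤ := (hpack.trans_lt (ENat.natCast_lt_top B)).ne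
  have hSfin : (maximalSeparatedSet ε A).Finite :=
    Set.encard_ne_top_iff.1 (encard_maximalSeparatedSet hfin ▸ hfin)
  exact ⟨hSfin.toFinset, by simpa using maximalSeparatedSet_subset,
    by simpa using isSeparated_maximalSeparatedSet, by simpa using isCover_maximalSeparatedSet hfin⟩

section PolyMap

variable {σ ι : Type*}

/-- The polynomial map `ℝ^σ → ℝ^ι` with coordinates `φ`, valued in Euclidean space. -/
noncomputable def polyMap (φ : ι → MvPolynomial σ ℝ) (a : σ → ℝ) : EuclideanSpace ℝ ι :=
  WithLp.toLp 2 fun k ↦ MvPolynomial.eval a (φ k)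

variable [Fintype ι]

/-- The squared distance from `y` to the point of `polyMap φ` with indeterminate parameters. -/
noncomputable def distSqPoly (φ : ι → MvPolynomial σ ℝ) (y : EuclideanSpace ℝ ι) :
    MvPolynomial σ ℝ :=
  ∑ k, (φ k - MvPolynomial.C (y k)) ^ 2

lemma eval_distSqPoly (φ : ι → MvPolynomial σ ℝ) (y : EuclideanSpace ℝ ι) (a : σ → ℝ) :
    MvPolynomial.eval a (distSqPoly φ y) = dist y (polyMap φ a) ^ 2 := by
  rw [dist_comm, EuclideanSpace.dist_sq_eq]
  simp [distSqPoly, polyMap, Real.dist_eq]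

lemma degreeOf_distSqPoly_le {φ : ι → MvPolynomial σ ℝ} {v : σ} {δ : ℕ}
    (hφ : ∀ k, (φ k).degreeOf v ≤ δ) (y : EuclideanSpace ℝ ι) :
    (distSqPoly φ y).degreeOf v ≤ 2 * δ := by
  refine (MvPolynomial.degreeOf_sum_le _ _ _).trans (Finset.sup_le fun k _ ↦ ?_)
  refine (MvPolynomial.degreeOf_pow_le _ _ _).trans (Nat.mul_le_mul_left 2 ?_)
  simpa using (MvPolynomial.degreeOf_sub_le v (φ k) (MvPolynomial.C (y k))).trans
    (max_le (hφ k) (by simp))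

variable [Fintype σ] {φ : ι → MvPolynomial σ ℝ} {δ : ℕ} {Y : Finset (EuclideanSpace ℝ ι)}

lemma card_le_of_sum_abs_eval_lt (hφ : ∀ k v, (φ k).degreeOf v ≤ δ)
    (hY : ↑Y ⊆ Set.range (polyMap φ)) (q : Polynomial ℝ)
    (hsum : ∀ y ∈ Y, ∑ z ∈ Y with z ≠ y, |q.eval (dist y z ^ 2)| < |q.eval 0|) :
    #Y ≤ (2 * δ * q.natDegree + 1) ^ Fintype.card σ := by
  classical
  choose a ha using fun z : Y ↦ hY z.2
  let P (y : EuclideanSpace ℝ ι) : MvPolynomial σ ℝ := Polynomial.aeval (distSqPoly φ y) q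
  have hP (y) : P y ∈ MvPolynomial.restrictDegree σ ℝ (2 * δ * q.natDegree) := by
    refine (MvPolynomial.mem_restrictDegree _ _ _).2 fun s hs v ↦
      MvPolynomial.degreeOf_le_iff.1 ((degreeOf_aeval_le v _ q).trans ?_) s hs
    rw [mul_comm]
    exact Nat.mul_le_mul_right _ (degreeOf_distSqPoly_le (hφ · v) y)
  have hPeval (y : EuclideanSpace ℝ ι) (z : Y) :
      MvPolynomial.aeval (a z) (P y) = q.eval (dist y z ^ 2) := by
    rw [← Polynomial.aeval_algHom_apply, MvPolynomial.aeval_eq_eval, eval_distSqPoly, ha,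
      Polynomial.coe_aeval_eq_eval]
  have hli : LinearIndependent ℝ fun y : Y ↦
      (⟨P y, hP y⟩ : MvPolynomial.restrictDegree σ ℝ (2 * δ * q.natDegree)) := by
    refine linearIndependent_of_sum_erase_lt (fun z ↦
      (MvPolynomial.aeval (a z)).toLinearMap ∘ₗ Submodule.subtype _) fun y ↦ ?_
    calc ∑ z ∈ univ.erase y, |MvPolynomial.aeval (a z) (P y)|
        = ∑ z ∈ Y with z ≠ y.1, |q.eval (dist y.1 z ^ 2)| := by
          simp_rw [hPeval, ← Finset.filter_ne', sum_filter, ← sum_coe_sort Y,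
            ne_eq, Subtype.ext_iff]
      _ < |q.eval 0| := hsum y y.2
      _ = |MvPolynomial.aeval (a y) (P y)| := by simp [hPeval]
  simpa [finrank_restrictDegree] using hli.fintype_card_le_finrank

lemma card_le_of_sum_pow_lt_one (hφ : ∀ k v, (φ k).degreeOf v ≤ δ)
    (hY : ↑Y ⊆ Set.range (polyMap φ)) {D : ℝ} (hD : ∀ y ∈ Y, ∀ z ∈ Y, dist y z ≤ D)
    {m k : ℕ} (hm : m ≠ 0)
    (hsum : ∀ y ∈ Y, ∑ z ∈ Y with z ≠ y, (D / (m * dist y z)) ^ (2 * k) < 1) :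
    #Y ≤ (2 * δ * (k * m) + 1) ^ Fintype.card σ := by
  let q : Polynomial ℝ := ((chebyshevKernel m).comp (.C (1 / D ^ 2) * .X)) ^ k
  have hq0 : q.eval 0 = 1 := by simp [q, eval_zero_chebyshevKernel hm]
  have hqdeg : q.natDegree ≤ k * m := by
    refine Polynomial.natDegree_pow_le.trans (Nat.mul_le_mul_left k ?_)
    rw [Polynomial.natDegree_comp]
    have hlin : (.C (1 / D ^ 2) * .X : Polynomial ℝ).natDegree ≤ 1 := by compute_degree
    exact (mul_le_of_le_one_right' hlin).trans (natDegree_chebyshevKernel_le m)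
  have hq {y z} (hy : y ∈ Y) (hz : z ∈ Y) (hzy : z ≠ y) :
      |q.eval (dist y z ^ 2)| ≤ (D / (m * dist y z)) ^ (2 * k) := by
    have hpos : 0 < dist y z := dist_pos.2 hzy.symm
    have hDpos : 0 < D := hpos.trans_le (hD y hy z hz)
    have hle : 1 / D ^ 2 * dist y z ^ 2 ≤ 1 := by
      rw [one_div_mul_eq_div, div_le_one (by positivity)]
      gcongr
      exact hD y hy z hz
    calc |q.eval (dist y z ^ 2)|
        = |(chebyshevKernel m).eval (1 / D ^ 2 * dist y z ^ 2)| ^ k := by simp [q]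
      _ ≤ (1 / (m ^ 2 * (1 / D ^ 2 * dist y z ^ 2))) ^ k := by
        gcongr
        exact abs_eval_chebyshevKernel_le m (by positivity) hle
      _ = (D / (m * dist y z)) ^ (2 * k) := by
        rw [pow_mul]
        congr 1
        field_simp
  calc #Y ≤ (2 * δ * q.natDegree + 1) ^ Fintype.card σ := by
        refine card_le_of_sum_abs_eval_lt hφ hY q fun y hy ↦ ?_
        rw [hq0, abs_one]
        refine (sum_le_sum fun z hz ↦ ?_).trans_lt (hsum y hy)
        exact hq hy (mem_filter.1 hz).1 (mem_filter.1 hz).2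
    _ ≤ (2 * δ * (k * m) + 1) ^ Fintype.card σ := by gcongr

section Packing

variable {D : ℝ} {ε : ℝ≥0}

lemma card_le_of_isSeparated_of_card_sub_one_mul_lt (hφ : ∀ k v, (φ k).degreeOf v ≤ δ)
    (hY : ↑Y ⊆ Set.range (polyMap φ)) (hsep : IsSeparated ε (Y : Set (EuclideanSpace ℝ ι)))
    (hε : 0 < ε) (hD : ∀ y ∈ Y, ∀ z ∈ Y, dist y z ≤ D) {m k : ℕ} (hm : m ≠ 0)
    (hcard : (#Y - 1) * (D / (m * ε)) ^ (2 * k) < 1) :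
    #Y ≤ (2 * δ * (k * m) + 1) ^ Fintype.card σ := by
  classical
  refine card_le_of_sum_pow_lt_one hφ hY hD hm fun y hy ↦ lt_of_le_of_lt ?_ hcard
  calc ∑ z ∈ Y with z ≠ y, (D / (m * dist y z)) ^ (2 * k)
      ≤ #{z ∈ Y | z ≠ y} • (D / (m * ε)) ^ (2 * k) := by
        refine sum_le_card_nsmul _ _ _ fun z hz ↦ ?_
        rw [mem_filter] at hz
        have hyz := lt_dist_of_isSeparated hsep hy hz.1 hz.2.symm
        have hD0 : 0 ≤ D := dist_nonneg.trans (hD y hy z hz.1)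
        gcongr
    _ = (#Y - 1) * (D / (m * ε)) ^ (2 * k) := by
        rw [nsmul_eq_mul, filter_ne', cast_card_erase_of_mem hy]

variable [Nonempty σ]

lemma card_le_of_isSeparated_of_card_sub_one_le (hφ : ∀ k v, (φ k).degreeOf v ≤ δ) (hδ : δ ≠ 0)
    (hY : ↑Y ⊆ Set.range (polyMap φ)) (hsep : IsSeparated ε (Y : Set (EuclideanSpace ℝ ι)))
    (hε : 0 < ε) (hD : ∀ y ∈ Y, ∀ z ∈ Y, dist y z ≤ D) (hεD : ε ≤ D)
    (hcard : #Y - 1 ≤ (5 * (δ * Fintype.card σ) * (D / ε)) ^ (2 * Fintype.card σ)) :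
    #Y ≤ (5 * (δ * Fintype.card σ) * (D / ε)) ^ (2 * Fintype.card σ) := by
  set p := Fintype.card σ
  have hp : p ≠ 0 := Fintype.card_ne_zero
  have hδp : (1 : ℝ) ≤ δ * p := by exact_mod_cast Nat.one_le_iff_ne_zero.2 (mul_ne_zero hδ hp)
  set x : ℝ := D / ε with hx
  have hx1 : 1 ≤ x := (one_le_div (NNReal.coe_pos.2 hε)).2 hεD
  set b : ℝ := 5 * (δ * p) * x
  have hb1 : 1 ≤ b := by nlinarith
  set m := ⌊x * b⌋₊ + 1
  have hm : x * b < m := by exact_mod_cast Nat.lt_floor_add_one _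
  have hm_le : (m : ℝ) ≤ 2 * (x * b) := by
    have := Nat.floor_le (a := x * b) (by positivity)
    push_cast [m]
    nlinarith
  have hYm : #Y ≤ (2 * δ * (p * m) + 1) ^ p := by
    refine card_le_of_isSeparated_of_card_sub_one_mul_lt hφ hY hsep hε hD (Nat.succ_ne_zero _) ?_
    calc (#Y - 1 : ℝ) * (D / (m * ε)) ^ (2 * p)
        ≤ b ^ (2 * p) * (x / m) ^ (2 * p) := by
          rw [mul_comm (m : ℝ), ← div_div, ← hx]
          gcongr
      _ = (x * b / m) ^ (2 * p) := by rw [← mul_pow, mul_div_assoc', mul_comm b]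
      _ < 1 := pow_lt_one₀ (by positivity) ((div_lt_one (by positivity)).2 hm) (by lia)
  calc (#Y : ℝ) ≤ (2 * (δ * p) * m + 1) ^ p := by
        rw [mul_assoc, mul_assoc, ← mul_assoc 2]
        exact_mod_cast hYm
    _ ≤ (b ^ 2) ^ p := by
        gcongr
        nlinarith
    _ = b ^ (2 * p) := (pow_mul _ _ _).symm

lemma card_le_pow_two_mul_card_of_isSeparated (hφ : ∀ k v, (φ k).degreeOf v ≤ δ) (hδ : δ ≠ 0)
    (hY : ↑Y ⊆ Set.range (polyMap φ)) (hsep : IsSeparated ε (Y : Set (EuclideanSpace ℝ ι)))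
    (hε : 0 < ε) (hD : ∀ y ∈ Y, ∀ z ∈ Y, dist y z ≤ D) (hεD : ε ≤ D) :
    #Y ≤ (5 * (δ * Fintype.card σ) * (D / ε)) ^ (2 * Fintype.card σ) := by
  set B : ℝ := (5 * (δ * Fintype.card σ) * (D / ε)) ^ (2 * Fintype.card σ)
  have hB0 : 0 ≤ B := (even_two_mul _).pow_nonneg _
  by_contra! hlt
  obtain ⟨Z, hZY, hZ⟩ := exists_subset_card_eq (Nat.succ_le_of_lt ((Nat.floor_lt hB0).2 hlt))
  have hZB : (#Z : ℝ) ≤ B :=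
    card_le_of_isSeparated_of_card_sub_one_le hφ hδ ((coe_subset.2 hZY).trans hY)
      (hsep.subset hZY) hε (fun y hy z hz ↦ hD y (hZY hy) z (hZY hz)) hεD <| by
        rw [hZ, Nat.cast_succ, add_sub_cancel_right]
        exact Nat.floor_le hB0
  rw [hZ, Nat.cast_succ] at hZB
  exact (Nat.lt_floor_add_one B).not_ge hZB

lemma div_dist_pow_le_inv_card_filter_sq [DecidableEq (EuclideanSpace ℝ ι)]
    (hφ : ∀ k v, (φ k).degreeOf v ≤ δ) (hδ : δ ≠ 0)
    (hY : ↑Y ⊆ Set.range (polyMap φ)) (hsep : IsSeparated ε (Y : Set (EuclideanSpace ℝ ι)))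
    (hε : 0 < ε) {y z : EuclideanSpace ℝ ι} (hy : y ∈ Y) (hz : z ∈ Y.erase y) :
    (ε / (20 * (δ * Fintype.card σ) * dist y z)) ^ (2 * (2 * Fintype.card σ)) ≤
      1 / 4 * ((#{w ∈ Y.erase y | dist y w ≤ dist y z} : ℝ) ^ 2)⁻¹ := by
  set p := Fintype.card σ
  have hp : p ≠ 0 := Fintype.card_ne_zero
  set ρ := dist y z
  set N := {w ∈ Y.erase y | dist y w ≤ ρ}
  have hNY : N ⊆ Y := (filter_subset _ _).trans (erase_subset _ _)
  have hzN : 0 < #N := card_pos.2 ⟨z, mem_filter.2 ⟨hz, le_rfl⟩⟩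
  have hερ : ε < ρ := lt_dist_of_isSeparated hsep hy (mem_of_mem_erase hz) (ne_of_mem_erase hz).symm
  have hdiam : ∀ w ∈ N, ∀ w' ∈ N, dist w w' ≤ 2 * ρ := fun w hw w' hw' ↦ by
    linarith [dist_triangle_left w w' y, (mem_filter.1 hw).2, (mem_filter.1 hw').2]
  have hcrude : (#N : ℝ) ≤ (5 * (δ * p) * (2 * ρ / ε)) ^ (2 * p) :=
    card_le_pow_two_mul_card_of_isSeparated hφ hδ ((coe_subset.2 hNY).trans hY)
      (hsep.subset hNY) hε hdiam (by linarith [NNReal.coe_nonneg ε])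
  have hε' : (0 : ℝ) < ε := hε
  have hρ : 0 < ρ := hε'.trans hερ
  calc (ε / (20 * (δ * p) * ρ)) ^ (2 * (2 * p))
      = (1 / 2 : ℝ) ^ (2 * (2 * p)) * (((5 * (δ * p) * (2 * ρ / ε)) ^ (2 * p)) ^ 2)⁻¹ := by
        rw [← pow_mul, mul_comm (2 * p) 2, ← inv_pow, ← mul_pow]
        congr 1
        field_simp
        norm_num
    _ ≤ (1 / 2 : ℝ) ^ 2 * ((#N : ℝ) ^ 2)⁻¹ := by
        gcongr ?_ * (?_ ^ 2)⁻¹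
        exact pow_le_pow_of_le_one (by norm_num) (by norm_num) (by lia)
    _ = 1 / 4 * ((#N : ℝ) ^ 2)⁻¹ := by norm_num

lemma card_le_pow_card_of_isSeparated (hφ : ∀ k v, (φ k).degreeOf v ≤ δ) (hδ : δ ≠ 0)
    (hY : ↑Y ⊆ Set.range (polyMap φ)) (hsep : IsSeparated ε (Y : Set (EuclideanSpace ℝ ι)))
    (hε : 0 < ε) (hD : ∀ y ∈ Y, ∀ z ∈ Y, dist y z ≤ D) (hεD : ε ≤ D) :
    #Y ≤ (85 * (δ * Fintype.card σ) ^ 2 * (D / ε)) ^ Fintype.card σ := by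
  classical
  set p := Fintype.card σ
  have hp : p ≠ 0 := Fintype.card_ne_zero
  have hδp : (1 : ℝ) ≤ δ * p := by exact_mod_cast Nat.one_le_iff_ne_zero.2 (mul_ne_zero hδ hp)
  have hε' : (0 : ℝ) < ε := hε
  set x : ℝ := D / ε with hx
  have hx1 : 1 ≤ x := (one_le_div hε').2 hεD
  set m := ⌈20 * (δ * p) * x⌉₊
  have hm : 20 * (δ * p) * x ≤ m := Nat.le_ceil _
  have hm_le : m ≤ 21 * (δ * p) * x := by
    have := Nat.ceil_lt_add_one (a := 20 * (δ * p) * x) (by positivity)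
    nlinarith
  have hm0 : m ≠ 0 := by positivity
  have hterm {y z} (hz : z ∈ Y.erase y) :
      D / (m * dist y z) ≤ ε / (20 * (δ * p) * dist y z) := by
    have hyz : 0 < dist y z := dist_pos.2 (ne_of_mem_erase hz).symm
    calc D / (m * dist y z) = ε * x / (m * dist y z) := by rw [hx, mul_div_cancel₀ _ hε'.ne']
      _ ≤ ε * x / (20 * (δ * p) * x * dist y z) := by gcongr
      _ = ε / (20 * (δ * p) * dist y z) := by field_simp
  have hcard : #Y ≤ (2 * δ * (2 * p * m) + 1) ^ p := by
    refine card_le_of_sum_pow_lt_one hφ hY hD hm0 fun y hy ↦ ?_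
    have : 0 ≤ D := dist_nonneg.trans (hD y hy y hy)
    calc ∑ z ∈ Y with z ≠ y, (D / (m * dist y z)) ^ (2 * (2 * p))
        ≤ ∑ z ∈ Y.erase y, 1 / 4 * ((#{w ∈ Y.erase y | dist y w ≤ dist y z} : ℝ) ^ 2)⁻¹ := by
          rw [filter_ne']
          refine sum_le_sum fun z hz ↦ (pow_le_pow_left₀ (by positivity) (hterm hz) _).trans ?_
          exact div_dist_pow_le_inv_card_filter_sq hφ hδ hY hsep hε hy hz
      _ ≤ 1 / 4 * 2 := by
          rw [← mul_sum]
          gcongr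
          exact sum_inv_card_filter_sq_le _ _
      _ < 1 := by norm_num
  calc (#Y : ℝ) ≤ (4 * (δ * p) * m + 1) ^ p := by
        rw [show 4 * (δ * p) * (m : ℝ) = 2 * δ * (2 * p * m) by ring]
        exact_mod_cast hcard
    _ ≤ (85 * (δ * p) ^ 2 * x) ^ p := by
        gcongr
        nlinarith [mul_le_mul hδp hδp zero_le_one (by positivity)]

lemma card_le_pow_of_isSeparated (hφ : ∀ k v, (φ k).degreeOf v ≤ δ) (hδ : δ ≠ 0)
    (hY : ↑Y ⊆ Set.range (polyMap φ)) (hsep : IsSeparated ε (Y : Set (EuclideanSpace ℝ ι)))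
    (hε : 0 < ε) (hD : ∀ y ∈ Y, ∀ z ∈ Y, dist y z ≤ D) (hεD : ε ≤ D) {P q : ℕ}
    (hP : δ * Fintype.card σ ≤ P) (hq : Fintype.card σ ≤ q) :
    #Y ≤ (85 * (P : ℝ) ^ 2 * (D / ε)) ^ q := by
  have : 0 ≤ D := (NNReal.coe_nonneg ε).trans hεD
  have hP' : (δ * Fintype.card σ : ℝ) ≤ P := by exact_mod_cast hP
  have hx : 1 ≤ D / ε := (one_le_div (NNReal.coe_pos.2 hε)).2 hεD
  have hP1 : (1 : ℝ) ≤ P := by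
    exact_mod_cast (Nat.one_le_iff_ne_zero.2 (mul_ne_zero hδ Fintype.card_ne_zero)).trans hP
  have hbase : 1 ≤ 85 * (P : ℝ) ^ 2 * (D / ε) :=
    one_le_mul_of_one_le_of_one_le (by nlinarith) hx
  calc (#Y : ℝ) ≤ (85 * (δ * Fintype.card σ) ^ 2 * (D / ε)) ^ Fintype.card σ :=
        card_le_pow_card_of_isSeparated hφ hδ hY hsep hε hD hεD
    _ ≤ (85 * (P : ℝ) ^ 2 * (D / ε)) ^ Fintype.card σ := by gcongr
    _ ≤ (85 * (P : ℝ) ^ 2 * (D / ε)) ^ q := pow_le_pow_right₀ hbase hq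

end Packing

end PolyMap

section ProductBounds

variable {ι : Type*} {n : ι → ℕ}

lemma sum_le_prod_of_two_le {s : Finset ι} (hs : s.Nonempty) (hn : ∀ i ∈ s, 2 ≤ n i) :
    ∑ i ∈ s, n i ≤ ∏ i ∈ s, n i := by
  suffices 2 ≤ ∑ i ∈ s, n i ∧ ∑ i ∈ s, n i ≤ ∏ i ∈ s, n i from this.2
  induction hs using Finset.Nonempty.cons_induction with
  | singleton i => simpa using hn
  | cons i s _ _ ih =>
    obtain ⟨hsum, hle⟩ := ih fun j hj ↦ hn j (mem_cons_of_mem hj)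
    have hni := hn i (mem_cons_self i s)
    rw [sum_cons, prod_cons]
    refine ⟨by lia, (Nat.add_le_add_left hle _).trans ?_⟩
    exact Nat.add_le_mul hni (hsum.trans hle)

lemma log_mul_prod_pow_mul_le [Fintype ι] [Nonempty ι] (hn : ∀ i, 2 ≤ n i) {x : ℝ} (hx : 0 < x) :
    Real.log (170 * ((∏ i, n i : ℕ) : ℝ) ^ 4 * x) ≤ Real.log x + 12 * ∑ i, Real.log (n i) := by
  have hn0 (i) : (n i : ℝ) ≠ 0 := by exact_mod_cast (two_pos.trans_le (hn i)).ne'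
  have hprod : Real.log (∏ i, (n i : ℝ)) = ∑ i, Real.log (n i) := Real.log_prod fun i _ ↦ hn0 i
  have hlog2 : Real.log 2 ≤ ∑ i, Real.log (n i) := by
    obtain ⟨i⟩ := ‹Nonempty ι›
    calc Real.log 2 ≤ Real.log (n i) := Real.log_le_log two_pos (by exact_mod_cast hn i)
      _ ≤ ∑ i, Real.log (n i) :=
        single_le_sum (f := fun i ↦ Real.log (n i)) (fun i _ ↦ Real.log_natCast_nonneg _)
          (mem_univ i)
  have hlog170 : Real.log 170 ≤ 8 * Real.log 2 := by
    calc Real.log 170 ≤ Real.log (2 ^ 8) := Real.log_le_log (by norm_num) (by norm_num)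
      _ = 8 * Real.log 2 := by simp
  have hprod0 : ∏ i, (n i : ℝ) ≠ 0 := prod_ne_zero_iff.2 fun i _ ↦ hn0 i
  push_cast
  rw [Real.log_mul (by positivity) hx.ne', Real.log_mul (by norm_num) (by positivity),
    Real.log_pow, hprod]
  push_cast
  linarith

end ProductBounds

section CPRank

variable {d : ℕ} {n : Fin d → ℕ}

/-- The entry at `k` of a sum of `r` elementary tensors, as a polynomial in the `r (∑ i, n i)`
entries of the factors. -/
noncomputable def cpPoly (n : Fin d → ℕ) (r : ℕ) (k : (i : Fin d) → Fin (n i)) :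
    MvPolynomial (Fin r × (Σ i, Fin (n i))) ℝ :=
  ∑ j, ∏ i, MvPolynomial.X (j, ⟨i, k i⟩)

lemma CPRankLE.mem_range_polyMap {r : ℕ} {T : EuclideanSpace ℝ ((i : Fin d) → Fin (n i))}
    (hT : CPRankLE r T) : T ∈ Set.range (polyMap (cpPoly n r)) := by
  obtain ⟨a, ha⟩ := hT
  refine ⟨fun v ↦ a v.1 v.2.1 v.2.2, PiLp.ext fun k ↦ ?_⟩
  simp [polyMap, cpPoly, ha]

lemma degreeOf_cpPoly_le (r : ℕ) (k : (i : Fin d) → Fin (n i)) (v : Fin r × (Σ i, Fin (n i))) :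
    (cpPoly n r k).degreeOf v ≤ 1 := by
  classical
  refine (MvPolynomial.degreeOf_sum_le _ _ _).trans (Finset.sup_le fun j _ ↦ ?_)
  calc (∏ i, MvPolynomial.X (j, ⟨i, k i⟩) : MvPolynomial _ ℝ).degreeOf v
      ≤ ∑ i, (MvPolynomial.X (j, ⟨i, k i⟩) : MvPolynomial _ ℝ).degreeOf v :=
        MvPolynomial.degreeOf_prod_le _ _ _
    _ ≤ ∑ i, if i = v.2.1 then 1 else 0 := by
        refine sum_le_sum fun i _ ↦ ?_
        rw [MvPolynomial.degreeOf_X]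
        split_ifs with hv hi
        exacts [le_rfl, absurd (hv ▸ rfl) hi, zero_le_one, le_rfl]
    _ = 1 := by simp

lemma cpRankLE_zero [Nonempty (Fin d)] (r : ℕ) :
    CPRankLE r (0 : EuclideanSpace ℝ ((i : Fin d) → Fin (n i))) :=
  ⟨0, fun k ↦ by simp [prod_eq_zero (mem_univ (Classical.arbitrary (Fin d)))]⟩

lemma card_le_of_isSeparated_of_cpRankLE [Nonempty (Fin d)] (hn : ∀ i, 2 ≤ n i) {r : ℕ}
    (hr : 1 ≤ r) {t : ℝ} {ε : ℝ≥0} (hε : 0 < ε) (hεt : ε ≤ 2 * t)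
    {Y : Finset (EuclideanSpace ℝ ((i : Fin d) → Fin (n i)))}
    (hY : (Y : Set (EuclideanSpace ℝ ((i : Fin d) → Fin (n i)))) ⊆ {T | CPRankLE r T ∧ ‖T‖ ≤ t})
    (hsep : IsSeparated ε (Y : Set (EuclideanSpace ℝ ((i : Fin d) → Fin (n i))))) :
    #Y ≤ (170 * ((∏ i, n i : ℕ) : ℝ) ^ 4 * (t / ε)) ^ (r * ∑ i, n i) := by
  set N := ∏ i, n i with hN
  have hsN : ∑ i, n i ≤ N := sum_le_prod_of_two_le univ_nonempty fun i _ ↦ hn i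
  have hs : 1 ≤ ∑ i, n i := sum_pos (fun i _ ↦ two_pos.trans_le (hn i)) univ_nonempty
  have hn0 (i) : Nonempty (Fin (n i)) := ⟨0, two_pos.trans_le (hn i)⟩
  have hdiam : ∀ y ∈ Y, ∀ z ∈ Y, dist y z ≤ 2 * t := fun y hy z hz ↦ by
    linarith [dist_le_norm_add_norm y z, (hY hy).2, (hY hz).2]
  rw [show 170 * (N : ℝ) ^ 4 * (t / ε) = 85 * ((N ^ 2 : ℕ) : ℝ) ^ 2 * (2 * t / ε) by
    push_cast; ring]
  obtain hrN | hNr := le_total r N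
  · have : Nonempty (Fin r × (Σ i, Fin (n i))) :=
      ⟨⟨0, hr⟩, Classical.arbitrary _, Classical.arbitrary _⟩
    have hcard : Fintype.card (Fin r × (Σ i, Fin (n i))) = r * ∑ i, n i := by simp
    refine card_le_pow_of_isSeparated (degreeOf_cpPoly_le r) one_ne_zero
      (fun T hT ↦ (hY hT).1.mem_range_polyMap) hsep hε hdiam hεt ?_ hcard.le
    rw [one_mul, hcard, sq]
    exact Nat.mul_le_mul hrN hsN
  · -- With `r ≥ N` the factorization has too many parameters; use the `N` entries themselves.
    have hcard : Fintype.card ((i : Fin d) → Fin (n i)) = N := by simp [hN]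
    refine card_le_pow_of_isSeparated (φ := MvPolynomial.X) (δ := 1) (fun k v ↦ ?_) one_ne_zero
      (fun T _ ↦ ⟨T, PiLp.ext fun k ↦ by simp [polyMap]⟩) hsep hε hdiam hεt ?_ ?_
    · classical
      rw [MvPolynomial.degreeOf_X]
      split_ifs <;> simp
    · rw [one_mul, hcard]
      exact Nat.le_self_pow two_ne_zero N
    · rw [hcard]
      exact hNr.trans (Nat.le_mul_of_pos_right r hs)

end CPRank

/-- Covering number bound for tensors of CP rank at most `r` and Frobenius norm at
most `t`: there is an `ε`-net `F` with
`log |F| ≤ r(Σᵢ nᵢ)·log(t/ε) + C·r(Σᵢ nᵢ)·(Σᵢ log nᵢ)`. -/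
theorem covering_low_cp_rank : ∃ C : ℝ, 0 < C ∧
    ∀ (d : ℕ), 1 ≤ d → ∀ (n : Fin d → ℕ), (∀ i, 2 ≤ n i) →
    ∀ (r : ℕ), 1 ≤ r → ∀ (t ε : ℝ), 0 < t → 0 < ε → ε ≤ 2 * t →
    ∃ F : Finset (EuclideanSpace ℝ ((i : Fin d) → Fin (n i))),
      (↑F ⊆ {T : EuclideanSpace ℝ ((i : Fin d) → Fin (n i)) | CPRankLE r T ∧ ‖T‖ ≤ t}) ∧
      Real.log F.card
        ≤ r * (∑ i, (n i : ℝ)) * Real.log (t / ε)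
          + C * r * (∑ i, (n i : ℝ)) * (∑ i, Real.log (n i)) ∧
      ∀ T : EuclideanSpace ℝ ((i : Fin d) → Fin (n i)),
        CPRankLE r T → ‖T‖ ≤ t → ∃ y ∈ F, dist T y ≤ ε := by
  refine ⟨12, by norm_num, fun d hd n hn r hr t ε ht hε hεt ↦ ?_⟩
  have : Nonempty (Fin d) := ⟨0, hd⟩
  lift ε to ℝ≥0 using hε.le
  obtain ⟨F, hFV, hFsep, hFcov⟩ := exists_finset_isCover_of_card_le fun _ hYV hY ↦
    Nat.le_floor (card_le_of_isSeparated_of_cpRankLE hn hr hε hεt hYV hY)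
  refine ⟨F, hFV, ?_, fun T hT hTt ↦ ?_⟩
  · have hF : F.Nonempty := hFcov.nonempty ⟨0, cpRankLE_zero r, norm_zero.trans_le ht.le⟩
    calc Real.log #F
        ≤ Real.log ((170 * ((∏ i, n i : ℕ) : ℝ) ^ 4 * (t / ε)) ^ (r * ∑ i, n i)) :=
          Real.log_le_log (Nat.cast_pos.2 hF.card_pos)
            (card_le_of_isSeparated_of_cpRankLE hn hr hε hεt hFV hFsep)
      _ = r * (∑ i, (n i : ℝ)) * Real.log (170 * ((∏ i, n i : ℕ) : ℝ) ^ 4 * (t / ε)) := by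
          rw [Real.log_pow]
          push_cast
          rfl
      _ ≤ r * (∑ i, (n i : ℝ)) * (Real.log (t / ε) + 12 * ∑ i, Real.log (n i)) := by
          gcongr
          exact log_mul_prod_pow_mul_le hn (div_pos ht hε)
      _ = _ := by ring
  · obtain ⟨y, hy, hTy⟩ :=
      Set.mem_iUnion₂.1 (isCover_iff_subset_iUnion_closedBall.1 hFcov ⟨hT, hTt⟩)
    exact ⟨y, hy, hTy⟩
end
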